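/- Let Ω ⊂ ℂⁿ, n ≥ 2, be a bounded domain admitting a C³ defining function ρ such that every boundary point of Ω is strongly pseudoconvex (with respect to ρ), and let p ∈ ∂Ω. If F : Ω → Ω is a holomorphic map such that F(z₀) = z₀ for some z₀ ∈ Ω and F(z) = z + o(‖z−p‖²) as z → p within Ω, then F(z) = z for all z ∈ Ω. -/

import Mathlib

open Complex Topology Filter Metric Set Function

noncomputable section

/-- `ℂⁿ` as a normed space. -/
abbrev En (n : ℕ) : Type := EuclideanSpace ℂ (Fin n)

/-- A domain: a nonempty open connected set. -/
def IsDomain' {n : ℕ} (Ω : Set (En n)) : Prop :=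
  IsOpen Ω ∧ IsConnected Ω

/-- The Levi form of `ρ` at `q` in direction `ξ`:
`(1/4)(H_q(ξ,ξ) + H_q(iξ,iξ))` with `H_q` the second real Fréchet derivative. -/
def LeviForm {n : ℕ} (ρ : En n → ℝ) (q ξ : En n) : ℝ :=
  (1 / 4) * (iteratedFDeriv ℝ 2 ρ q ![ξ, ξ] + iteratedFDeriv ℝ 2 ρ q ![I • ξ, I • ξ])

/-- `ξ` lies in the complex tangent space of `{ρ = 0}` at `q`. -/
def InCplxTangent {n : ℕ} (ρ : En n → ℝ) (q ξ : En n) : Prop :=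
  fderiv ℝ ρ q ξ = 0 ∧ fderiv ℝ ρ q (I • ξ) = 0

/-- `ρ` is a `C^m` defining function for `Ω`. -/
def IsDefiningFunction {n : ℕ} (Ω : Set (En n)) (m : ℕ∞) (ρ : En n → ℝ) : Prop :=
  ContDiff ℝ m ρ ∧ Ω = {z | ρ z < 0} ∧ frontier Ω = {z | ρ z = 0} ∧
    ∀ q ∈ frontier Ω, fderiv ℝ ρ q ≠ 0

/-- `q` is a strongly pseudoconvex point with respect to `ρ`. -/
def StronglyPcxAt {n : ℕ} (ρ : En n → ℝ) (q : En n) : Prop :=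
  ∀ ξ : En n, ξ ≠ 0 → InCplxTangent ρ q ξ → 0 < LeviForm ρ q ξ

/-- `Ω` is pseudoconvex with `C^∞` boundary, witnessed by the defining function `ρ`. -/
def IsPcxCinfBoundary {n : ℕ} (Ω : Set (En n)) (ρ : En n → ℝ) : Prop :=
  IsDefiningFunction Ω ⊤ ρ ∧
    ∀ q ∈ frontier Ω, ∀ ξ : En n, InCplxTangent ρ q ξ → 0 ≤ LeviForm ρ q ξ

/-- `F z = z + o(‖z - p‖^k)` as `z → p` within `Ω`. -/
def LittleOh {n : ℕ} (Ω : Set (En n)) (F : En n → En n) (p : En n) (k : ℕ) : Prop :=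
  Tendsto (fun z => ‖F z - z‖ / ‖z - p‖ ^ k) (𝓝[Ω] p) (𝓝 0)

/-- `F` is an automorphism of `Ω`: a holomorphic bijection with holomorphic inverse. -/
def IsAutomorphismOf {n : ℕ} (F : En n → En n) (Ω : Set (En n)) : Prop :=
  DifferentiableOn ℂ F Ω ∧ MapsTo F Ω Ω ∧
    ∃ G : En n → En n, DifferentiableOn ℂ G Ω ∧ MapsTo G Ω Ω ∧
      (∀ z ∈ Ω, G (F z) = z) ∧ (∀ z ∈ Ω, F (G z) = z)

/-!
A quadratic shear puts `p` at the origin and makes `Ω` strongly convex there, pinched between two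
paraboloids. For a self map tangent to the identity to second order, a Phragmén–Lindelöf argument
on discs through the origin shows that the map expands the horospheres at the origin at most by a
fixed factor, which does not depend on the map. Rescaling anisotropically then bounds the Jacobian
determinants of all iterates `F^[k]` along a fixed disc transversal to the boundary.

If `|det dF(z₀)| < 1`, these determinants decay exponentially in `k` on compact sets, and the
two-constants theorem on the disc gives `O(exp (-γ k τ))` at distance `τ` from the origin. For
`k τ` of order a large constant, however, `F^[k]` is still close to the identity at distance `τ`,
because `k τ²` is small; so `|det dF(z₀)| ≥ 1`. Since `dF(z₀)` is power bounded, all its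
eigenvalues are then unimodular. An eigenvalue `l ≠ 1` would yield, as a limit of averages of
`l⁻ʲ F^[j]`, a nonconstant `f` with `f ∘ F = l • f`; near the origin `F` hardly moves points, which
makes `f` so small there that it vanishes identically. Hence `dF(z₀)` is power bounded with `1` as
its only eigenvalue, so it is the identity, and Cartan's uniqueness theorem applies.
-/

namespace HuangConjecture

/-! ### Bounded holomorphic maps on balls -/

section LocalBound

variable {E G : Type*} [NormedAddCommGroup E] [NormedAddCommGroup G] {f : E → G} {x : E} {r M : ℝ}

theorem mapsTo_closedBall_of_norm_le (hr : 0 < r) (hM : ∀ w ∈ ball x r, ‖f w‖ ≤ M) :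
    MapsTo f (ball x r) (closedBall (f x) (2 * M)) := fun w hw => by
  rw [mem_closedBall, dist_eq_norm]
  linarith [norm_sub_le (f w) (f x), hM w hw, hM x (mem_ball_self hr)]

theorem exists_ball_subset_norm_le {Ω : Set E} (hΩ : IsOpen Ω) (hf : ContinuousOn f Ω)
    (hx : x ∈ Ω) : ∃ r > 0, ball x r ⊆ Ω ∧ ∃ M > 0, ∀ w ∈ ball x r, ‖f w‖ ≤ M := by
  have hlt : ∀ᶠ w in 𝓝 x, ‖f w‖ < ‖f x‖ + 1 :=
    (hf.continuousAt (hΩ.mem_nhds hx)).norm.eventually_lt_const (by linarith)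
  obtain ⟨r, hr, h⟩ := Metric.eventually_nhds_iff_ball.1 (hlt.and (hΩ.eventually_mem hx))
  exact ⟨r, hr, fun w hw => (h w hw).2, ‖f x‖ + 1, by positivity, fun w hw => (h w hw).1.le⟩

end LocalBound

section HolomorphicMaps

variable {E G : Type*} [NormedAddCommGroup E] [NormedSpace ℂ E]
  [NormedAddCommGroup G] [NormedSpace ℂ G]

section BoundedOnBall

variable {f : E → G} {x y : E} {r M : ℝ}

theorem norm_sub_le_of_norm_le_on_ball (hd : DifferentiableOn ℂ f (ball x r))
    (hM : ∀ w ∈ ball x r, ‖f w‖ ≤ M) (hy : y ∈ ball x r) :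
    ‖f y - f x‖ ≤ 2 * M / r * ‖y - x‖ := by
  simpa only [dist_eq_norm] using Complex.dist_le_div_mul_dist_of_mapsTo_ball hd
    (mapsTo_closedBall_of_norm_le (nonempty_ball.1 ⟨y, hy⟩) hM) hy

theorem norm_fderiv_le_of_norm_le_on_ball (hr : 0 < r) (hd : DifferentiableOn ℂ f (ball x r))
    (hM : ∀ w ∈ ball x r, ‖f w‖ ≤ M) : ‖fderiv ℂ f x‖ ≤ 2 * M / r :=
  Complex.norm_fderiv_le_div_of_mapsTo_ball hd (mapsTo_closedBall_of_norm_le hr hM) hr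

theorem norm_sub_sub_fderiv_le_of_norm_le_on_ball (hd : DifferentiableOn ℂ f (ball x r))
    (hM : ∀ w ∈ ball x r, ‖f w‖ ≤ M) (hy : y ∈ ball x r) :
    ‖f y - f x - fderiv ℂ f x (y - x)‖ ≤ 4 * M * (‖y - x‖ / r) ^ 2 := by
  have hr : 0 < r := nonempty_ball.1 ⟨y, hy⟩
  have hx := mem_ball_self hr (x := x)
  set h : E → G := fun w => f w - f x - fderiv ℂ f x (w - x) with hh
  have h0 : h x = 0 := by simp [hh]
  have hbound : MapsTo h (ball x r) (closedBall (h x) (4 * M)) := fun w hw => by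
    rw [mem_closedBall, dist_eq_norm, h0, sub_zero]
    have hlin : ‖fderiv ℂ f x (w - x)‖ ≤ 2 * M / r * r :=
      (fderiv ℂ f x).le_of_opNorm_le_of_le (norm_fderiv_le_of_norm_le_on_ball hr hd hM)
        (mem_ball_iff_norm.1 hw).le
    rw [div_mul_cancel₀ _ hr.ne'] at hlin
    linarith [norm_sub_le (f w - f x) (fderiv ℂ f x (w - x)), norm_sub_le (f w) (f x), hM w hw,
      hM x hx]
  have hfx : HasFDerivAt f (fderiv ℂ f x) x :=
    (hd.differentiableAt (ball_mem_nhds x hr)).hasFDerivAt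
  have hlittle : (fun w => h w - h x) =o[𝓝 x] fun w => ‖w - x‖ ^ 1 := by
    simpa only [h0, sub_zero, pow_one] using hfx.isLittleO.norm_right
  have hdiff : DifferentiableOn ℂ h (ball x r) := (hd.sub_const _).sub (by fun_prop)
  have := Complex.dist_le_mul_div_pow_of_mapsTo_ball_of_isLittleO hdiff hbound hlittle hy
  rwa [h0, dist_zero_right, dist_eq_norm] at this

end BoundedOnBall

/-! ### Holomorphic dependence of the derivative -/

section Derivative

variable [FiniteDimensional ℂ E] [FiniteDimensional ℂ G]

theorem exists_hasFDerivAt_of_tendsto_ultrafilter {ι : Type*} {U : Ultrafilter ι}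
    {f : ι → E → G} {g : E → G} {x : E} {r M : ℝ} (hr : 0 < r)
    (hd : ∀ᶠ i in (U : Filter ι), DifferentiableOn ℂ (f i) (ball x r))
    (hM : ∀ᶠ i in (U : Filter ι), ∀ w ∈ ball x r, ‖f i w‖ ≤ M)
    (hg : ∀ w ∈ ball x r, Tendsto (fun i => f i w) U (𝓝 (g w))) :
    ∃ D : E →L[ℂ] G, HasFDerivAt g D x ∧ Tendsto (fun i => fderiv ℂ (f i) x) U (𝓝 D) := by
  have : ProperSpace (E →L[ℂ] G) := FiniteDimensional.proper ℂ _
  have hmem : ∀ᶠ i in (U : Filter ι), fderiv ℂ (f i) x ∈ closedBall 0 (2 * M / r) := by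
    filter_upwards [hd, hM] with i hdi hMi
    simpa using norm_fderiv_le_of_norm_le_on_ball hr hdi hMi
  obtain ⟨D, -, hD⟩ := (isCompact_closedBall (0 : E →L[ℂ] G) (2 * M / r)).ultrafilter_le_nhds
    (U.map fun i => fderiv ℂ (f i) x) (le_principal_iff.2 hmem)
  replace hD : Tendsto (fun i => fderiv ℂ (f i) x) U (𝓝 D) := hD
  refine ⟨D, ?_, hD⟩
  have hrem : ∀ w ∈ ball x r, ‖g w - g x - D (w - x)‖ ≤ 4 * M / r ^ 2 * ‖w - x‖ ^ 2 := by
    intro w hw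
    refine le_of_tendsto (((hg w hw).sub (hg x (mem_ball_self hr))).sub
      (((ContinuousLinearMap.apply ℂ G (w - x)).continuous.tendsto D).comp hD)).norm ?_
    filter_upwards [hd, hM] with i hdi hMi
    refine (norm_sub_sub_fderiv_le_of_norm_le_on_ball hdi hMi hw).trans_eq ?_
    rw [div_pow]; ring
  have hO : (fun w => g w - g x - D (w - x)) =O[𝓝 x] fun w => ‖w - x‖ ^ 2 := by
    refine Asymptotics.IsBigO.of_bound (4 * M / r ^ 2) ?_
    filter_upwards [ball_mem_nhds x hr] with w hw
    simpa using hrem w hw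
  have hsub : Tendsto (fun w => ‖w - x‖) (𝓝 x) (𝓝 0) := tendsto_norm_sub_self x
  exact .of_isLittleO <| hO.trans_isLittleO <| .of_norm_right <|
    (Asymptotics.isLittleO_pow_id (𝕜 := ℝ) one_lt_two).comp_tendsto hsub

theorem differentiableOn_fderiv_apply {f : E → G} {Ω : Set E} (hΩ : IsOpen Ω)
    (hf : DifferentiableOn ℂ f Ω) (v : E) : DifferentiableOn ℂ (fun z => fderiv ℂ f z v) Ω := by
  intro x hx
  obtain ⟨r, hr, hrΩ, M, -, hM⟩ := exists_ball_subset_norm_le hΩ hf.continuousOn hx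
  have hd : DifferentiableOn ℂ f (ball x r) := hf.mono hrΩ
  let U : Ultrafilter ℂ := Ultrafilter.of (𝓝[≠] 0)
  have hU : (U : Filter ℂ) ≤ 𝓝[≠] 0 := Ultrafilter.of_le _
  have hsmall : ∀ᶠ t : ℂ in U, t ≠ 0 ∧ ‖t • v‖ < r / 2 := by
    refine hU (eventually_mem_nhdsWithin.and (eventually_nhdsWithin_of_eventually_nhds ?_))
    have : Tendsto (fun t : ℂ => ‖t • v‖) (𝓝 0) (𝓝 0) := by
      simpa using ((tendsto_id (x := 𝓝 (0 : ℂ))).smul_const v).norm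
    exact this.eventually_lt_const (by positivity)
  have hsub : ∀ w ∈ ball x (r / 2), ball w (r / 2) ⊆ ball x r := fun w hw =>
    ball_subset_ball' (by linarith [mem_ball.1 hw])
  have hadd : ∀ w : E, ∀ t : ℂ, ‖t • v‖ < r / 2 → w + t • v ∈ ball w (r / 2) := fun w t ht => by
    rwa [mem_ball_iff_norm, add_sub_cancel_left]
  obtain ⟨D, hD, -⟩ := exists_hasFDerivAt_of_tendsto_ultrafilter (U := U)
    (f := fun t y => t⁻¹ • (f (y + t • v) - f y)) (g := fun z => fderiv ℂ f z v) (x := x)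
    (M := 2 * M / (r / 2) * ‖v‖) (half_pos hr)
    (by
      filter_upwards [hsmall] with t ⟨_, ht⟩
      exact ((hd.comp (by fun_prop) fun w hw => hsub w hw (hadd w t ht)).sub
        (hd.mono (ball_subset_ball (by linarith)))).const_smul _)
    (by
      filter_upwards [hsmall] with t ⟨ht0, ht⟩ w hw
      have hquot := norm_sub_le_of_norm_le_on_ball (hd.mono (hsub w hw))
        (fun y hy => hM y (hsub w hw hy)) (hadd w t ht)
      rw [add_sub_cancel_left, norm_smul] at hquot
      rw [norm_smul, norm_inv, inv_mul_le_iff₀ (norm_pos_iff.2 ht0)]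
      exact hquot.trans_eq (by ring))
    (fun w hw => ((hd.differentiableAt (isOpen_ball.mem_nhds (ball_subset_ball (by linarith) hw)))
      |>.hasFDerivAt.hasLineDerivAt v).tendsto_slope_zero.mono_left hU)
  exact hD.differentiableAt.differentiableWithinAt

end Derivative

section Determinant

variable [FiniteDimensional ℂ E]

theorem differentiableOn_det_fderiv {f : E → E} {Ω : Set E} (hΩ : IsOpen Ω)
    (hf : DifferentiableOn ℂ f Ω) : DifferentiableOn ℂ (fun z => (fderiv ℂ f z).det) Ω := by
  classical
  let b := Module.finBasis ℂ E
  have hdet : ∀ z, (fderiv ℂ f z).det =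
      ∑ σ : Equiv.Perm (Fin (Module.finrank ℂ E)), ((Equiv.Perm.sign σ : ℤ) : ℂ) *
        ∏ i, LinearMap.toContinuousLinearMap (b.coord (σ i)) (fderiv ℂ f z (b i)) := by
    intro z
    rw [ContinuousLinearMap.det, ← LinearMap.det_toMatrix b, Matrix.det_apply']
    simp [LinearMap.toMatrix_apply]
  have hentry : ∀ i j, DifferentiableOn ℂ
      (fun z => LinearMap.toContinuousLinearMap (b.coord j) (fderiv ℂ f z (b i))) Ω := fun i j =>
    (ContinuousLinearMap.differentiable _).comp_differentiableOn
      (differentiableOn_fderiv_apply hΩ hf (b i))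
  simp_rw [hdet]
  exact DifferentiableOn.fun_sum fun σ _ => DifferentiableOn.const_mul (fun z hz =>
    (HasFDerivWithinAt.finsetProd fun i _ =>
      (hentry i (σ i) z hz).hasFDerivWithinAt).differentiableWithinAt) _

variable (E) in
theorem exists_norm_det_le (R : ℝ) : ∃ C > 0, ∀ T : E →L[ℂ] E, ‖T‖ ≤ R → ‖T.det‖ ≤ C := by
  have : ProperSpace (E →L[ℂ] E) := FiniteDimensional.proper ℂ _
  obtain ⟨C, hC⟩ := (isCompact_closedBall (0 : E →L[ℂ] E) R).exists_bound_of_continuousOn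
    (ContinuousLinearMap.continuous_det (𝕜 := ℂ) (E := E)).continuousOn
  exact ⟨max C 1, by positivity, fun T hT => (hC T (by simpa using hT)).trans (le_max_left _ _)⟩

end Determinant

end HolomorphicMaps

/-! ### Propagation along connected sets -/

theorem subset_of_ball_subset_of_isPreconnected {X : Type*} [PseudoMetricSpace X] {Ω S : Set X}
    (hΩ : IsPreconnected Ω) (hS : IsOpen S) (hne : (Ω ∩ S).Nonempty)
    (h : ∀ z ∈ Ω, ∃ R > 0, ∀ y ∈ S, ∀ r > 0, ball y (3 * r) ⊆ ball z R → ball y (2 * r) ⊆ S) :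
    Ω ⊆ S := by
  refine hΩ.subset_of_closure_inter_subset hS hne ?_
  rintro z ⟨hzS, hz⟩
  obtain ⟨R, hR, hz⟩ := h z hz
  obtain ⟨y, hy, hzy⟩ := Metric.mem_closure_iff.1 hzS (R / 4) (by positivity)
  refine hz y hy (R / 4) (by positivity) (ball_subset_ball' ?_) ?_
  · rw [dist_comm]; linarith
  · rw [mem_ball]; linarith

section ExpDecay

variable {E G : Type*} [NormedAddCommGroup E] [NormedSpace ℂ E]
  [NormedAddCommGroup G] [NormedSpace ℂ G]

theorem exists_norm_one_le_rpow_mul_rpow {δ : ℝ} (hδ : 0 < δ) (hδ1 : δ < 1) :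
    ∃ τ : ℝ, 0 < τ ∧ τ < 1 ∧ ∀ (φ : ℂ → G) (a M : ℝ), DifferentiableOn ℂ φ (ball 0 (3 / 2)) →
      (∀ t ∈ ball (0 : ℂ) (3 / 2), ‖φ t‖ ≤ M) → (∀ t : ℂ, ‖t‖ ≤ δ → ‖φ t‖ ≤ a) →
      ‖φ 1‖ ≤ a ^ (1 - τ) * M ^ τ := by
  set l := Real.log δ
  set u := Real.log (4 / 3)
  have hl : l < 0 := Real.log_neg hδ hδ1
  have hu : 0 < u := Real.log_pos (by norm_num)
  refine ⟨(0 - l) / (u - l), div_pos (by linarith) (by linarith),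
    (div_lt_one (by linarith)).2 (by linarith), fun φ a M hφ hM ha => ?_⟩
  have hexp : ∀ s : ℂ, s.re ≤ u → Complex.exp s ∈ ball (0 : ℂ) (3 / 2) := by
    intro s hs
    rw [mem_ball_zero_iff, Complex.norm_exp]
    calc Real.exp s.re ≤ Real.exp u := Real.exp_le_exp.2 hs
      _ = 4 / 3 := Real.exp_log (by norm_num)
      _ < 3 / 2 := by norm_num
  have hcl : closure (Complex.HadamardThreeLines.verticalStrip l u) ⊆ {s : ℂ | s.re ≤ u} :=
    closure_minimal (fun s hs => hs.2.le) (isClosed_le Complex.continuous_re continuous_const)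
  have hd : DiffContOnCl ℂ (fun s => φ (Complex.exp s))
      (Complex.HadamardThreeLines.verticalStrip l u) :=
    DifferentiableOn.diffContOnCl (hφ.comp (by fun_prop) fun s hs => hexp s (hcl hs))
  have hleft : ∀ s ∈ Complex.re ⁻¹' {l}, ‖φ (Complex.exp s)‖ ≤ a := fun s hs => ha _ (by
    rw [Complex.norm_exp, mem_singleton_iff.1 hs, Real.exp_log hδ])
  have := Complex.HadamardThreeLines.norm_le_interp_of_mem_verticalClosedStrip' (z := 0)
    (by linarith) ⟨by simpa using hl.le, by simpa using hu.le⟩ hd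
    ⟨M, by rintro _ ⟨s, hs, rfl⟩; exact hM _ (hexp s hs.2)⟩ hleft
    fun s hs => hM _ (hexp s (le_of_eq hs))
  simpa using this

theorem exists_norm_le_rpow_mul_rpow_on_ball {s r : ℝ} (hs : 0 < s) (hr : 0 < r) :
    ∃ τ : ℝ, 0 < τ ∧ τ < 1 ∧ ∀ (f : E → G) (y : E) (a M : ℝ),
      DifferentiableOn ℂ f (ball y (3 * r)) → (∀ w ∈ ball y (3 * r), ‖f w‖ ≤ M) →
      (∀ w ∈ ball y s, ‖f w‖ ≤ a) → ∀ w ∈ ball y (2 * r), ‖f w‖ ≤ a ^ (1 - τ) * M ^ τ := by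
  obtain ⟨τ, hτ, hτ1, hdisc⟩ := exists_norm_one_le_rpow_mul_rpow (G := G)
    (δ := min (s / (2 * r)) (1 / 2)) (by positivity) (min_lt_of_right_lt (by norm_num))
  refine ⟨τ, hτ, hτ1, fun f y a M hf hM ha w hw => ?_⟩
  rw [mem_ball_iff_norm] at hw
  have hnorm : ∀ t : ℂ, ‖y + t • (w - y) - y‖ = ‖t‖ * ‖w - y‖ := fun t => by
    rw [add_sub_cancel_left, norm_smul]
  have hmaps : MapsTo (fun t : ℂ => y + t • (w - y)) (ball 0 (3 / 2)) (ball y (3 * r)) := by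
    intro t ht
    rw [mem_ball_zero_iff] at ht
    rw [mem_ball_iff_norm, hnorm]
    nlinarith [norm_nonneg (w - y), norm_nonneg t]
  have hsmall : ∀ t : ℂ, ‖t‖ ≤ min (s / (2 * r)) (1 / 2) → y + t • (w - y) ∈ ball y s := by
    intro t ht
    have hts : ‖t‖ * (2 * r) ≤ s := (le_div_iff₀ (by positivity)).1 (ht.trans (min_le_left _ _))
    rw [mem_ball_iff_norm, hnorm]
    rcases (norm_nonneg t).eq_or_lt with ht0 | ht0
    · simpa [← ht0] using hs
    · exact (mul_lt_mul_of_pos_left hw ht0).trans_le hts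
  simpa using hdisc (fun t => f (y + t • (w - y))) a M (hf.comp (by fun_prop) hmaps)
    (fun t ht => hM _ (hmaps ht)) fun t ht => ha _ (hsmall t ht)

theorem eqOn_zero_of_eventuallyEq_zero {f : E → G} {Ω : Set E} {x : E} (hΩ : IsOpen Ω)
    (hconn : IsPreconnected Ω) (hf : DifferentiableOn ℂ f Ω) (hx : x ∈ Ω) (h0 : f =ᶠ[𝓝 x] 0) :
    EqOn f 0 Ω := by
  have hopen : IsOpen {z | f =ᶠ[𝓝 z] 0} := isOpen_setOfPred_eventually_nhds
  suffices Ω ⊆ {z | f =ᶠ[𝓝 z] 0} from fun z hz => (this hz).self_of_nhds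
  refine subset_of_ball_subset_of_isPreconnected hconn hopen ⟨x, hx, h0⟩ fun z hz => ?_
  obtain ⟨R, hR, hRΩ, M, -, hM⟩ := exists_ball_subset_norm_le hΩ hf.continuousOn hz
  refine ⟨R, hR, fun y hy r hr hyR => ?_⟩
  obtain ⟨s, hs, hzero⟩ := Metric.eventually_nhds_iff_ball.1 hy
  obtain ⟨τ, -, hτ1, hinterp⟩ := exists_norm_le_rpow_mul_rpow_on_ball (E := E) (G := G) hs hr
  refine fun w hw => eventually_of_mem (isOpen_ball.mem_nhds hw) fun v hv => ?_
  have := hinterp f y 0 M (hf.mono (hyR.trans hRΩ)) (fun w hw => hM w (hyR hw))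
    (fun w hw => by simp [hzero w hw]) v hv
  simpa [Real.zero_rpow (sub_pos.2 hτ1).ne'] using this

/-- The sequence `g` decays exponentially, uniformly on `s`. -/
def ExpDecayOn {X G : Type*} [NormedAddCommGroup G] (g : ℕ → X → G) (s : Set X) : Prop :=
  ∃ C > 0, ∃ c > 0, ∀ k : ℕ, ∀ w ∈ s, ‖g k w‖ ≤ C * Real.exp (-c * k)

namespace ExpDecayOn

theorem mono {X G : Type*} [NormedAddCommGroup G] {g : ℕ → X → G} {s t : Set X}
    (h : ExpDecayOn g t) (hst : s ⊆ t) : ExpDecayOn g s := by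
  obtain ⟨C, hC, c, hc, h⟩ := h
  exact ⟨C, hC, c, hc, fun k w hw => h k w (hst hw)⟩

theorem union {X G : Type*} [NormedAddCommGroup G] {g : ℕ → X → G} {s t : Set X}
    (hs : ExpDecayOn g s) (ht : ExpDecayOn g t) : ExpDecayOn g (s ∪ t) := by
  obtain ⟨C, hC, c, hc, hs⟩ := hs
  obtain ⟨C', -, c', hc', ht⟩ := ht
  refine ⟨max C C', by positivity, min c c', by positivity, ?_⟩
  rintro k w (hw | hw)
  · refine (hs k w hw).trans ?_
    gcongr
    exacts [le_max_left _ _, min_le_left _ _]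
  · refine (ht k w hw).trans ?_
    gcongr
    exacts [le_max_right _ _, min_le_right _ _]

variable {g : ℕ → E → G} {Ω K : Set E} {x₀ : E}

theorem ball_two_mul {y : E} {r M σ : ℝ} (hσ : 0 < σ) (hr : 0 < r)
    (hg : ∀ k, DifferentiableOn ℂ (g k) (ball y (3 * r)))
    (hM : ∀ k, ∀ w ∈ ball y (3 * r), ‖g k w‖ ≤ M) (h : ExpDecayOn g (ball y σ)) :
    ExpDecayOn g (ball y (2 * r)) := by
  obtain ⟨C, hC, c, hc, h⟩ := h
  obtain ⟨τ, -, hτ1, hinterp⟩ := exists_norm_le_rpow_mul_rpow_on_ball (E := E) (G := G) hσ hr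
  refine ⟨C ^ (1 - τ) * (|M| + 1) ^ τ, by positivity, c * (1 - τ), mul_pos hc (sub_pos.2 hτ1),
    fun k w hw => ?_⟩
  calc ‖g k w‖ ≤ (C * Real.exp (-c * k)) ^ (1 - τ) * (|M| + 1) ^ τ :=
        hinterp (g k) y _ _ (hg k) (fun w hw => (hM k w hw).trans (by linarith [le_abs_self M]))
          (h k) w hw
    _ = C ^ (1 - τ) * (|M| + 1) ^ τ * Real.exp (-(c * (1 - τ)) * k) := by
        rw [Real.mul_rpow hC.le (Real.exp_pos _).le, ← Real.exp_mul]
        ring_nf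

theorem of_isCompact (hΩ : IsOpen Ω) (hconn : IsPreconnected Ω)
    (hg : ∀ k, DifferentiableOn ℂ (g k) Ω)
    (hb : ∀ x ∈ Ω, ∃ r > 0, ∃ M : ℝ, ∀ k, ∀ w ∈ ball x r, ‖g k w‖ ≤ M) (hx₀ : x₀ ∈ Ω)
    (h₀ : ∃ t ∈ 𝓝 x₀, ExpDecayOn g t) (hK : IsCompact K) (hKΩ : K ⊆ Ω) : ExpDecayOn g K := by
  set S : Set E := {x | ∃ t ∈ 𝓝 x, ExpDecayOn g t}
  have hS : IsOpen S := isOpen_iff_mem_nhds.2 fun x ⟨t, ht, h⟩ =>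
    (eventually_mem_nhds_iff.2 ht).mono fun _ hy => ⟨t, hy, h⟩
  have hΩS : Ω ⊆ S := by
    refine subset_of_ball_subset_of_isPreconnected hconn hS ⟨x₀, hx₀, h₀⟩ fun z hz => ?_
    obtain ⟨R₁, hR₁, M, hM⟩ := hb z hz
    obtain ⟨R₂, hR₂, hRΩ⟩ := Metric.isOpen_iff.1 hΩ z hz
    refine ⟨min R₁ R₂, by positivity, ?_⟩
    rintro y ⟨t, ht, h⟩ r hr hyR w hw
    obtain ⟨σ, hσ, hσt⟩ := Metric.mem_nhds_iff.1 ht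
    exact ⟨_, isOpen_ball.mem_nhds hw, (h.mono hσt).ball_two_mul hσ hr
      (fun k => (hg k).mono (hyR.trans ((ball_subset_ball (min_le_right _ _)).trans hRΩ)))
      fun k v hv => hM k v (ball_subset_ball (min_le_left _ _) (hyR hv))⟩
  refine hK.induction_on ⟨1, one_pos, 1, one_pos, by simp⟩ (fun s t hst ht => ht.mono hst)
    (fun s t => union) fun x hx => ?_
  obtain ⟨t, ht, h⟩ := hΩS (hKΩ hx)
  exact ⟨t, mem_nhdsWithin_of_mem_nhds ht, h⟩

end ExpDecayOn

end ExpDecay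

/-! ### The horosphere estimate in one variable -/

theorem norm_le_on_halfDisc {h : ℂ → ℂ} {a C R : ℝ}
    (hd : ∀ X : ℂ, a ≤ X.re → ‖X‖ ≤ R → DifferentiableAt ℂ h X)
    (hline : ∀ X : ℂ, X.re = a → ‖X‖ ≤ R → ‖h X‖ ≤ C)
    (harc : ∀ X : ℂ, a ≤ X.re → ‖X‖ = R → ‖h X‖ ≤ C) {X : ℂ} (hX : a ≤ X.re) (hXR : ‖X‖ ≤ R) :
    ‖h X‖ ≤ C := by
  by_contra! hlt
  have hXa : a < X.re := hX.lt_of_ne fun h => hlt.not_ge (hline X h.symm hXR)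
  replace hXR : ‖X‖ < R := hXR.lt_of_ne fun h => hlt.not_ge (harc X hX h)
  set U : Set ℂ := {Y : ℂ | a < Y.re ∧ ‖Y‖ < R}
  have hUo : IsOpen U := (isOpen_lt continuous_const Complex.continuous_re).inter
    (isOpen_lt continuous_norm continuous_const)
  have hUb : Bornology.IsBounded U :=
    (isBounded_ball (x := (0 : ℂ)) (r := R)).subset fun Y hY => by simpa using hY.2
  have hcl : closure U ⊆ {Y : ℂ | a ≤ Y.re ∧ ‖Y‖ ≤ R} :=
    closure_minimal (fun Z hZ => ⟨hZ.1.le, hZ.2.le⟩) <|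
      (isClosed_le continuous_const Complex.continuous_re).inter
        (isClosed_le continuous_norm continuous_const)
  refine hlt.not_ge (Complex.norm_le_of_forall_mem_frontier_norm_le hUb
    (DifferentiableOn.diffContOnCl fun Y hY =>
      (hd Y (hcl hY).1 (hcl hY).2).differentiableWithinAt)
    (fun Y hY => ?_) (subset_closure ⟨hXa, hXR⟩))
  rw [hUo.frontier_eq] at hY
  obtain ⟨hYa, hYR⟩ := hcl hY.1
  rcases hYa.eq_or_lt with h | h
  · exact hline Y h.symm hYR
  · exact harc Y hYa (hYR.antisymm (le_of_not_gt fun hYR' => hY.2 ⟨h, hYR'⟩))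

theorem norm_le_on_halfPlane {h : ℂ → ℂ} {a C R : ℝ}
    (hd : ∀ X : ℂ, a ≤ X.re → DifferentiableAt ℂ h X)
    (hline : ∀ X : ℂ, X.re = a → ‖h X‖ ≤ C)
    (hinf : ∀ X : ℂ, a ≤ X.re → R ≤ ‖X‖ → ‖h X‖ ≤ C) {X : ℂ} (hX : a ≤ X.re) : ‖h X‖ ≤ C := by
  rcases le_total R ‖X‖ with hXR | hXR
  · exact hinf X hX hXR
  · exact norm_le_on_halfDisc (fun Y hY _ => hd Y hY) (fun Y hY _ => hline Y hY)
      (fun Y hY hYR => hinf Y hY hYR.ge) hX hXR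

theorem re_sub_le_re_on_halfPlane {φ : ℂ → ℂ} {a R : ℝ} (ha : 0 ≤ a)
    (hd : ∀ X : ℂ, a ≤ X.re → DifferentiableAt ℂ φ X)
    (hpos : ∀ X : ℂ, X.re = a → 0 ≤ (φ X).re)
    (hinf : ∀ X : ℂ, a ≤ X.re → R ≤ ‖X‖ → X.re ≤ (φ X).re) {X : ℂ} (hX : a ≤ X.re) :
    X.re - a ≤ (φ X).re := by
  have hnorm : ∀ Y, ‖Complex.exp (Y - φ Y)‖ ≤ Real.exp a ↔ Y.re - (φ Y).re ≤ a := fun Y => by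
    rw [Complex.norm_exp, Real.exp_le_exp, Complex.sub_re]
  have := (hnorm X).1 <| norm_le_on_halfPlane (h := fun Y => Complex.exp (Y - φ Y)) (R := R)
    (fun Y hY => (differentiableAt_id.sub (hd Y hY)).cexp)
    (fun Y hY => (hnorm Y).2 (by linarith [hpos Y hY]))
    (fun Y hY hYR => (hnorm Y).2 (by linarith [hinf Y hY hYR])) hX
  linarith

theorem re_inv_le_inv_re {w : ℂ} (hw : 0 < w.re) : (w⁻¹).re ≤ (w.re)⁻¹ := by
  have h := Complex.re_le_norm w⁻¹
  rw [norm_inv] at h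
  exact h.trans (inv_anti₀ hw (Complex.re_le_norm w))

theorem re_inv_pos {w : ℂ} (hw : 0 < w.re) : 0 < (w⁻¹).re := by
  rw [Complex.inv_re]
  exact div_pos hw (Complex.normSq_pos.2 fun h => by simp [h] at hw)

section Horodisc

variable {E : Type*} [NormedAddCommGroup E] [NormedSpace ℂ E]

/-- A bounded analytic disc `g`, parametrized by the half plane `A < Re X`, with a reciprocal
normal coordinate `φ` defined along the part of the disc in the ball of radius `ε`: the point at
infinity is sent to the origin, and `re_le_re` says that there the disc is tangent to the
standard one up to horospheres. -/
structure IsHorodisc (g : ℂ → E) (φ : ℂ → ℂ) (A R B ε κ : ℝ) : Prop where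
  nonneg : 0 ≤ A
  differentiableAt : ∀ {X : ℂ}, A < X.re → DifferentiableAt ℂ g X
  norm_le : ∀ {X : ℂ}, A < X.re → ‖g X‖ ≤ B
  differentiableAt_coord : ∀ {X : ℂ}, A < X.re → ‖g X‖ < ε → DifferentiableAt ℂ φ X
  re_pos : ∀ {X : ℂ}, A < X.re → ‖g X‖ < ε → 0 < (φ X).re
  le_re_inv : ∀ {X : ℂ}, A < X.re → ‖g X‖ < ε → ε / 4 ≤ ‖g X‖ → κ ≤ ((φ X)⁻¹).re
  norm_lt : ∀ {X : ℂ}, A < X.re → R ≤ ‖X‖ → ‖g X‖ < ε / 2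
  re_le_re : ∀ {X : ℂ}, A < X.re → R ≤ ‖X‖ → X.re ≤ (φ X).re

namespace IsHorodisc

variable {g : ℂ → E} {φ : ℂ → ℂ} {A R B ε κ r s t N : ℝ} {c X : ℂ}

theorem sub_le_re (h : IsHorodisc g φ A R B ε κ) (hr : A < r)
    (hg : ∀ Y : ℂ, r < Y.re → ‖g Y‖ < ε) (hX : r < X.re) : X.re - r ≤ (φ X).re := by
  suffices X.re - (φ X).re ≤ r by linarith
  refine le_of_forall_gt_imp_ge_of_dense fun a ha => ?_
  rcases le_total a X.re with haX | haX
  · have := re_sub_le_re_on_halfPlane (φ := φ) (R := R) (h.nonneg.trans (hr.trans ha).le)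
      (fun Y hY => h.differentiableAt_coord (by linarith) (hg Y (by linarith)))
      (fun Y hY => (h.re_pos (by linarith) (hg Y (by linarith))).le)
      (fun Y hY => h.re_le_re (by linarith)) haX
    linarith
  · linarith [h.re_pos (hr.trans hX) (hg X hX)]

theorem exists_rightmost (h : IsHorodisc g φ A R B ε κ) (hr : A < r)
    (hbad : ∃ X : ℂ, r ≤ X.re ∧ ε / 2 ≤ ‖g X‖) :
    ∃ c : ℂ, r ≤ c.re ∧ ε / 2 ≤ ‖g c‖ ∧ ∀ X : ℂ, c.re < X.re → ‖g X‖ < ε / 2 := by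
  set S : Set ℂ := {X : ℂ | r ≤ X.re ∧ ε / 2 ≤ ‖g X‖}
  have hSc : IsClosed S := ContinuousOn.preimage_isClosed_of_isClosed
    (fun X hX => (h.differentiableAt (hr.trans_le hX)).continuousAt.norm.continuousWithinAt)
    (isClosed_le continuous_const Complex.continuous_re) isClosed_Ici
  have hSb : Bornology.IsBounded S :=
    (isBounded_ball (x := (0 : ℂ)) (r := R)).subset fun X hX => by
      rw [mem_ball_zero_iff]
      by_contra! hR
      exact (h.norm_lt (hr.trans_le hX.1) hR).not_ge hX.2
  obtain ⟨c, hc, hmax⟩ := (Metric.isCompact_of_isClosed_isBounded hSc hSb).exists_isMaxOn hbad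
    Complex.continuous_re.continuousOn
  refine ⟨c, hc.1, hc.2, fun X hX => ?_⟩
  by_contra! hgX
  exact hX.not_ge (hmax (show X ∈ S from ⟨hc.1.trans hX.le, hgX⟩))

theorem lt_re_of_norm_sub_le (ht : A + t < c.re) (hX : ‖X - c‖ ≤ t) : A < X.re := by
  have := (Complex.abs_re_le_norm (X - c)).trans hX
  rw [Complex.sub_re, abs_le] at this
  linarith

theorem norm_sub_le (h : IsHorodisc g φ A R B ε κ) (ht : A + t < c.re) (hX : ‖X - c‖ < t) :
    ‖g X - g c‖ ≤ 2 * B / t * ‖X - c‖ :=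
  have hA : ∀ Y ∈ ball c t, A < Y.re := fun _ hY =>
    lt_re_of_norm_sub_le ht (mem_ball_iff_norm.1 hY).le
  norm_sub_le_of_norm_le_on_ball
    (fun Y hY => (h.differentiableAt (hA Y hY)).differentiableWithinAt)
    (fun Y hY => h.norm_le (hA Y hY)) (mem_ball_iff_norm.2 hX)

/-- The part of the annulus `s < ‖X - c‖ < t` where `‖g X‖ < a`, on which the maximum principle
is applied to `exp (-N / φ X) * t / (X - c)`. -/
def annulus (g : ℂ → E) (c : ℂ) (s t a : ℝ) : Set ℂ :=
  {X : ℂ | ‖X - c‖ ∈ Ioo s t ∧ ‖g X‖ < a}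

theorem isOpen_annulus (h : IsHorodisc g φ A R B ε κ) (ht : A + t < c.re) (a : ℝ) :
    IsOpen (annulus g c s t a) :=
  ContinuousOn.isOpen_inter_preimage (t := Iio a) (f := fun X => ‖g X‖)
    (fun _ hX => (h.differentiableAt (lt_re_of_norm_sub_le ht hX.2.le)).continuousAt.norm
      |>.continuousWithinAt) (isOpen_Ioo.preimage (by fun_prop : Continuous fun X => ‖X - c‖))
    isOpen_Iio

theorem closure_annulus_subset (h : IsHorodisc g φ A R B ε κ) (ht : A + t < c.re) (a : ℝ) :
    closure (annulus g c s t a) ⊆ {X : ℂ | ‖X - c‖ ∈ Icc s t ∧ ‖g X‖ ≤ a} :=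
  closure_minimal (fun _ hX => ⟨Ioo_subset_Icc_self hX.1, hX.2.le⟩) <|
    ContinuousOn.preimage_isClosed_of_isClosed (t := Iic a) (f := fun X => ‖g X‖)
      (fun _ hX => (h.differentiableAt (lt_re_of_norm_sub_le ht hX.2)).continuousAt.norm
        |>.continuousWithinAt) (isClosed_Icc.preimage (by fun_prop : Continuous fun X => ‖X - c‖))
      isClosed_Iic

theorem exp_neg_re_inv_le_of_mem_frontier (h : IsHorodisc g φ A R B ε κ) (hε : 0 < ε) (hs : 0 < s)
    (hst : s < t) (ht : A + t < c.re) (hnear : ∀ Y : ℂ, ‖Y - c‖ ≤ s → ε / 4 ≤ ‖g Y‖)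
    (hN0 : 0 ≤ N) (hN : Real.exp (-(N * κ)) ≤ s / t)
    (hX : X ∈ frontier (annulus g c s t (3 * ε / 4))) :
    Real.exp (-(N * ((φ X)⁻¹).re)) ≤ ‖X - c‖ / t := by
  have ht0 : 0 < t := hs.trans hst
  obtain ⟨⟨hsX, hXt⟩, hgX⟩ := h.closure_annulus_subset ht _ hX.1
  have hA : A < X.re := lt_re_of_norm_sub_le ht hXt
  have hgε : ‖g X‖ < ε := hgX.trans_lt (by linarith)
  by_cases hfar : ε / 4 ≤ ‖g X‖
  · calc Real.exp (-(N * ((φ X)⁻¹).re)) ≤ Real.exp (-(N * κ)) := by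
          gcongr; exact h.le_re_inv hA hgε hfar
      _ ≤ s / t := hN
      _ ≤ ‖X - c‖ / t := by gcongr
  · have htX : t ≤ ‖X - c‖ := by
      rw [(h.isOpen_annulus ht _).frontier_eq] at hX
      by_contra! hlt
      exact hX.2 ⟨⟨lt_of_not_ge fun hXs => hfar (hnear X hXs), hlt⟩, by linarith⟩
    refine le_trans ?_ ((one_le_div ht0).2 htX)
    rw [Real.exp_le_one_iff, neg_nonpos]
    exact mul_nonneg hN0 (re_inv_pos (h.re_pos hA hgε)).le

theorem exp_neg_re_inv_le (h : IsHorodisc g φ A R B ε κ) (hε : 0 < ε) (hs : 0 < s) (hst : s < t)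
    (ht : A + t < c.re) (hnear : ∀ Y : ℂ, ‖Y - c‖ ≤ s → ε / 4 ≤ ‖g Y‖) (hN0 : 0 ≤ N)
    (hN : Real.exp (-(N * κ)) ≤ s / t) (hX : X ∈ annulus g c s t (3 * ε / 4)) :
    Real.exp (-(N * ((φ X)⁻¹).re)) ≤ ‖X - c‖ / t := by
  have ht0 : 0 < t := hs.trans hst
  set W := annulus g c s t (3 * ε / 4)
  have hWb : Bornology.IsBounded W := (isBounded_ball (x := c) (r := t)).subset fun Y hY =>
    mem_ball_iff_norm.2 hY.1.2
  have hpos : ∀ Y ∈ closure W, 0 < ‖Y - c‖ := fun Y hY =>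
    hs.trans_le (h.closure_annulus_subset ht _ hY).1.1
  set f : ℂ → ℂ := fun Y => Complex.exp (-(N * (φ Y)⁻¹)) * (t / (Y - c))
  have hfd : ∀ Y ∈ closure W, DifferentiableAt ℂ f Y := by
    intro Y hY
    obtain ⟨hYt, hgY⟩ := h.closure_annulus_subset ht _ hY
    have hA : A < Y.re := lt_re_of_norm_sub_le ht hYt.2
    have hgε : ‖g Y‖ < ε := hgY.trans_lt (by linarith)
    have hφ0 : φ Y ≠ 0 := fun h0 => by simpa [h0] using h.re_pos hA hgε
    exact (((h.differentiableAt_coord hA hgε).inv hφ0).const_mul _).neg.cexp.mul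
      ((differentiableAt_const _).div (by fun_prop) (norm_pos_iff.1 (hpos Y hY)))
  have hf : ∀ Y ∈ closure W, ‖f Y‖ ≤ 1 ↔ Real.exp (-(N * ((φ Y)⁻¹).re)) ≤ ‖Y - c‖ / t := by
    intro Y hY
    rw [norm_mul, norm_div, Complex.norm_exp, Complex.neg_re, Complex.re_ofReal_mul,
      Complex.norm_real, Real.norm_of_nonneg ht0.le, mul_div_assoc', div_le_one (hpos Y hY),
      le_div_iff₀ ht0]
  exact (hf X (subset_closure hX)).1 <| Complex.norm_le_of_forall_mem_frontier_norm_le hWb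
    (DifferentiableOn.diffContOnCl fun Y hY => (hfd Y hY).differentiableWithinAt)
    (fun Y hY => (hf Y hY.1).2 (h.exp_neg_re_inv_le_of_mem_frontier hε hs hst ht hnear hN0 hN hY))
    (subset_closure hX)

/-- The radius, relative to `Re c`, on which `‖g‖` stays above `ε / 4` around a point `c` where
`‖g c‖ ≥ ε / 2`. -/
def nearRatio (B ε : ℝ) : ℝ := min (ε / (16 * B)) (1 / 8)

theorem nearRatio_pos (hB : 0 < B) (hε : 0 < ε) : 0 < nearRatio B ε := by
  unfold nearRatio; positivity

theorem nearRatio_le : nearRatio B ε ≤ 1 / 8 := min_le_right _ _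

theorem le_norm_of_norm_sub_le (h : IsHorodisc g φ A R B ε κ) (hB : 0 < B) (hr : 2 * A < c.re)
    (hgc : ε / 2 ≤ ‖g c‖) (hX : ‖X - c‖ ≤ nearRatio B ε * c.re) : ε / 4 ≤ ‖g X‖ := by
  have hc : 0 < c.re := by linarith [h.nonneg]
  have hlt : ‖X - c‖ < c.re / 2 :=
    hX.trans_lt (by nlinarith [nearRatio_le (B := B) (ε := ε)])
  have hsub : ‖g c - g X‖ ≤ ε / 4 := by
    rw [norm_sub_rev]
    calc ‖g X - g c‖ ≤ 2 * B / (c.re / 2) * ‖X - c‖ := h.norm_sub_le (by linarith) hlt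
      _ ≤ 2 * B / (c.re / 2) * (ε / (16 * B) * c.re) := by
        gcongr
        exact hX.trans (by gcongr; exact min_le_left _ _)
      _ = ε / 4 := by field_simp; ring
  linarith [norm_sub_norm_le (g c) (g X)]

/-- The exponent in the barrier function: `exp (-N κ) = 2 * nearRatio B ε`. -/
def barrierExponent (B ε κ : ℝ) : ℝ := -Real.log (2 * nearRatio B ε) / κ

theorem barrierExponent_nonneg (hB : 0 < B) (hε : 0 < ε) (hκ : 0 < κ) :
    0 ≤ barrierExponent B ε κ := by
  have hpos := nearRatio_pos hB hε
  exact div_nonneg (neg_nonneg.2 (Real.log_nonpos (by positivity)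
    (by linarith [nearRatio_le (B := B) (ε := ε)]))) hκ.le

theorem exp_neg_barrierExponent_mul (hB : 0 < B) (hε : 0 < ε) (hκ : 0 < κ) :
    Real.exp (-(barrierExponent B ε κ * κ)) = 2 * nearRatio B ε := by
  have hpos := nearRatio_pos hB hε
  rw [barrierExponent, div_mul_cancel₀ _ hκ.ne', neg_neg, Real.exp_log (by positivity)]

/-- The width of the transition region in the horosphere estimate; it is independent of the radius
beyond which the disc is assumed to be close to the standard one. -/
def horosphereConst (B ε κ : ℝ) : ℝ := 8 * barrierExponent B ε κ + 1

theorem horosphereConst_pos (hB : 0 < B) (hε : 0 < ε) (hκ : 0 < κ) :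
    0 < horosphereConst B ε κ := by
  have := barrierExponent_nonneg hB hε hκ
  unfold horosphereConst; positivity

theorem norm_lt_of_le_re (h : IsHorodisc g φ A R B ε κ) (hB : 0 < B) (hε : 0 < ε) (hκ : 0 < κ)
    (hX : 2 * A + horosphereConst B ε κ ≤ X.re) : ‖g X‖ < ε / 2 := by
  have hA := h.nonneg
  have hT := horosphereConst_pos hB hε hκ
  have hρ := nearRatio_pos hB hε
  have hρ8 := nearRatio_le (B := B) (ε := ε)
  set N := barrierExponent B ε κ
  by_contra! hgX
  obtain ⟨c, hcT, hgc, hright⟩ := h.exists_rightmost (r := 2 * A + horosphereConst B ε κ)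
    (by linarith) ⟨X, hX, hgX⟩
  have hr : 2 * A < c.re := by linarith
  have hr0 : 0 < c.re := by linarith
  set Y : ℂ := c + (c.re / 4 : ℝ)
  have hYc : ‖Y - c‖ = c.re / 4 := by
    rw [add_sub_cancel_left, Complex.norm_real, Real.norm_of_nonneg (by positivity)]
  have hYre : Y.re = c.re + c.re / 4 := by rw [Complex.add_re, Complex.ofReal_re]
  have hrY : c.re < Y.re := by linarith
  have hYmem : Y ∈ annulus g c (nearRatio B ε * c.re) (c.re / 2) (3 * ε / 4) :=
    ⟨by rw [hYc]; constructor <;> nlinarith, by linarith [hright Y hrY]⟩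
  have hupper : Real.exp (-(N * ((φ Y)⁻¹).re)) ≤ 1 / 2 := by
    refine (h.exp_neg_re_inv_le hε (by positivity) (by nlinarith) (by linarith)
      (fun Z hZ => h.le_norm_of_norm_sub_le hB hr hgc hZ) (barrierExponent_nonneg hB hε hκ)
      ?_ hYmem).trans_eq ?_
    · rw [exp_neg_barrierExponent_mul hB hε hκ]; exact le_of_eq (by field_simp)
    · rw [hYc]; field_simp; norm_num
  have hreY : c.re / 4 ≤ (φ Y).re := by
    linarith [h.sub_le_re (by linarith) (fun Z hZ => (hright Z hZ).trans (by linarith)) hrY]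
  have hlower : N * ((φ Y)⁻¹).re < 1 / 2 := by
    calc N * ((φ Y)⁻¹).re ≤ N * (c.re / 4)⁻¹ := by
          gcongr
          · exact barrierExponent_nonneg hB hε hκ
          · exact (re_inv_le_inv_re (by linarith)).trans (by gcongr)
      _ < 1 / 2 := by
        rw [← div_eq_mul_inv, div_lt_iff₀ (by positivity)]
        unfold horosphereConst at hcT; linarith
  linarith [Real.add_one_le_exp (-(N * ((φ Y)⁻¹).re))]

theorem re_sub_le (h : IsHorodisc g φ A R B ε κ) (hB : 0 < B) (hε : 0 < ε) (hκ : 0 < κ)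
    (hX : 2 * A + horosphereConst B ε κ ≤ X.re) :
    X.re - (2 * A + horosphereConst B ε κ) ≤ (φ X).re := by
  have hA := h.nonneg
  have hT := horosphereConst_pos hB hε hκ
  have hlt : ∀ Y : ℂ, 2 * A + horosphereConst B ε κ ≤ Y.re → ‖g Y‖ < ε := fun Y hY =>
    (h.norm_lt_of_le_re hB hε hκ hY).trans (by linarith)
  rcases hX.eq_or_lt with hXeq | hXlt
  · linarith [h.re_pos (by linarith) (hlt X hX)]
  · exact h.sub_le_re (by linarith) (fun Y hY => hlt Y hY.le) hXlt

end IsHorodisc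

end Horodisc

/-! ### Model domains and self maps tangent to the identity -/

section Model

variable {E : Type*} [NormedAddCommGroup E] [NormedSpace ℂ E]

/-- A bounded connected open set with the origin on its boundary, pinched near the origin between
two paraboloids with normal coordinate `ℓ`: a strongly convex one outside and a tangent ball
inside. -/
structure IsModelDomain (Ω : Set E) (ℓ : E →L[ℂ] ℂ) (c K ε : ℝ) : Prop where
  isOpen : IsOpen Ω
  isPreconnected : IsPreconnected Ω
  isBounded : Bornology.IsBounded Ω
  zero_notMem : (0 : E) ∉ Ω
  c_pos : 0 < c
  K_pos : 0 < K
  ε_pos : 0 < ε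
  outer : ∀ z ∈ Ω, ‖z‖ < ε → c * ‖z‖ ^ 2 ≤ (ℓ z).re + K * ‖ℓ z‖ ^ 2
  inner : ∀ z, K * ‖z‖ ^ 2 < (ℓ z).re → z ∈ Ω

/-- A holomorphic self map of `Ω` agreeing with the identity to second order at the origin. -/
structure IsTangentSelfMap (Ω : Set E) (f : E → E) : Prop where
  differentiableOn : DifferentiableOn ℂ f Ω
  mapsTo : MapsTo f Ω Ω
  isLittleO : (fun z => f z - z) =o[𝓝[Ω] 0] fun z => ‖z‖ ^ 2

namespace IsTangentSelfMap

variable {Ω : Set E} {f g : E → E}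

theorem isBigO (hf : IsTangentSelfMap Ω f) : f =O[𝓝[Ω] 0] fun z => z := by
  have hsq : (fun z : E => ‖z‖ ^ 2) =o[𝓝[Ω] 0] fun z => z :=
    (Asymptotics.isLittleO_norm_pow_id one_lt_two).mono nhdsWithin_le_nhds
  simpa using (hf.isLittleO.trans hsq).isBigO.add (Asymptotics.isBigO_refl (fun z : E => z) _)

theorem tendsto (hf : IsTangentSelfMap Ω f) : Tendsto f (𝓝[Ω] 0) (𝓝[Ω] 0) :=
  tendsto_nhdsWithin_iff.2 ⟨hf.isBigO.trans_tendsto (tendsto_id.mono_left nhdsWithin_le_nhds),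
    eventually_nhdsWithin_of_forall hf.mapsTo⟩

protected theorem comp (hf : IsTangentSelfMap Ω f) (hg : IsTangentSelfMap Ω g) :
    IsTangentSelfMap Ω (f ∘ g) where
  differentiableOn := hf.differentiableOn.comp hg.differentiableOn hg.mapsTo
  mapsTo := hf.mapsTo.comp hg.mapsTo
  isLittleO := by
    have hfg : (fun z => f (g z) - g z) =o[𝓝[Ω] 0] fun z => ‖z‖ ^ 2 :=
      (hf.isLittleO.comp_tendsto hg.tendsto).trans_isBigO (hg.isBigO.norm_norm.pow 2)
    simpa using hfg.add hg.isLittleO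

protected theorem id : IsTangentSelfMap Ω (_root_.id : E → E) where
  differentiableOn := differentiableOn_id
  mapsTo := mapsTo_id Ω
  isLittleO := by simp

theorem iterate (hf : IsTangentSelfMap Ω f) (k : ℕ) : IsTangentSelfMap Ω f^[k] := by
  induction k with
  | zero => exact .id
  | succ k ih => exact ih.comp hf

-- `X ↦ X⁻¹ • u` carries the point at infinity to the origin.
theorem eventually_cobounded_inv_smul {p : E → Prop} (hp : ∀ᶠ w in 𝓝[Ω] 0, p w) (u : E) :
    ∀ᶠ X : ℂ in Bornology.cobounded ℂ, X⁻¹ • u ∈ Ω → p (X⁻¹ • u) := by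
  have hlim : Tendsto (fun X : ℂ => X⁻¹ • u) (Bornology.cobounded ℂ) (𝓝 0) := by
    simpa using (tendsto_inv₀_cobounded (α := ℂ)).smul_const u
  exact hlim.eventually (eventually_nhdsWithin_iff.1 hp)

theorem eventually_norm_lt (hf : IsTangentSelfMap Ω f) {r : ℝ} (hr : 0 < r) :
    ∀ᶠ z in 𝓝[Ω] 0, ‖f z‖ < r := by
  simpa using (hf.tendsto.mono_right nhdsWithin_le_nhds).eventually (ball_mem_nhds 0 hr)

theorem eventually_norm_normal_mul_sub_one_le (hf : IsTangentSelfMap Ω f) {ℓ : E →L[ℂ] ℂ} {u : E}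
    (hu : ℓ u = 1) {δ : ℝ} (hδ : 0 < δ) :
    ∀ᶠ X : ℂ in Bornology.cobounded ℂ, X⁻¹ • u ∈ Ω →
      ‖ℓ (f (X⁻¹ • u)) * X - 1‖ * ‖X‖ ≤ δ := by
  obtain ⟨η, hη, hηδ⟩ := exists_pos_mul_lt hδ (‖ℓ‖ * ‖u‖ ^ 2)
  filter_upwards [eventually_cobounded_inv_smul (hf.isLittleO.def hη) u,
    Bornology.eventually_ne_cobounded (0 : ℂ)] with X hX hX0 hXΩ
  have hbound := hX hXΩ
  rw [norm_pow, norm_norm, norm_smul, norm_inv] at hbound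
  have := norm_pos_iff.2 hX0
  have hfactor : ℓ (f (X⁻¹ • u)) * X - 1 = ℓ (f (X⁻¹ • u) - X⁻¹ • u) * X := by
    rw [map_sub, map_smul, hu, smul_eq_mul, mul_one, sub_mul, inv_mul_cancel₀ hX0]
  calc ‖ℓ (f (X⁻¹ • u)) * X - 1‖ * ‖X‖
      = ‖ℓ (f (X⁻¹ • u) - X⁻¹ • u)‖ * ‖X‖ ^ 2 := by rw [hfactor, norm_mul]; ring
    _ ≤ ‖ℓ‖ * (η * (‖X‖⁻¹ * ‖u‖) ^ 2) * ‖X‖ ^ 2 := by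
      gcongr; exact ℓ.le_opNorm_of_le hbound
    _ = ‖ℓ‖ * ‖u‖ ^ 2 * η := by field_simp
    _ ≤ δ := hηδ.le

end IsTangentSelfMap

namespace IsModelDomain

variable {Ω : Set E} {ℓ : E →L[ℂ] ℂ} {c K ε B : ℝ} {f : E → E} {u w z : E} {X : ℂ}

theorem norm_pos (hD : IsModelDomain Ω ℓ c K ε) (hw : w ∈ Ω) : 0 < ‖w‖ :=
  norm_pos_iff.2 fun h => hD.zero_notMem (h ▸ hw)

theorem normal_ne_zero (hD : IsModelDomain Ω ℓ c K ε) (hw : w ∈ Ω) (hwε : ‖w‖ < ε) :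
    ℓ w ≠ 0 := by
  intro h0
  have houter := hD.outer w hw hwε
  have := mul_pos hD.c_pos (pow_pos (hD.norm_pos hw) 2)
  rw [h0, Complex.zero_re, norm_zero] at houter
  linarith

theorem le_re_inv_normal (hD : IsModelDomain Ω ℓ c K ε) (hw : w ∈ Ω) (hwε : ‖w‖ < ε) :
    c * ‖w‖ ^ 2 / ‖ℓ w‖ ^ 2 ≤ ((ℓ w)⁻¹ + K).re := by
  have hℓ : 0 < ‖ℓ w‖ := norm_pos_iff.2 (hD.normal_ne_zero hw hwε)
  rw [Complex.add_re, Complex.inv_re, Complex.ofReal_re, Complex.normSq_eq_norm_sq,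
    div_add' _ _ _ (by positivity)]
  gcongr
  exact hD.outer w hw hwε

theorem re_inv_normal_pos (hD : IsModelDomain Ω ℓ c K ε) (hw : w ∈ Ω) (hwε : ‖w‖ < ε) :
    0 < ((ℓ w)⁻¹ + K).re := by
  have hℓ : 0 < ‖ℓ w‖ := norm_pos_iff.2 (hD.normal_ne_zero hw hwε)
  have := hD.norm_pos hw
  have := hD.c_pos
  exact lt_of_lt_of_le (by positivity) (hD.le_re_inv_normal hw hwε)

theorem norm_inv_normal_add_le (hD : IsModelDomain Ω ℓ c K ε) (hw : w ∈ Ω) (hwε : ‖w‖ < ε) :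
    ‖(ℓ w)⁻¹ + K‖ ≤ (1 + K * ‖ℓ‖ * ε) / ‖ℓ w‖ := by
  have hK := hD.K_pos
  have hℓ : 0 < ‖ℓ w‖ := norm_pos_iff.2 (hD.normal_ne_zero hw hwε)
  calc ‖(ℓ w)⁻¹ + (K : ℂ)‖ ≤ ‖ℓ w‖⁻¹ + K := by
        refine (norm_add_le _ _).trans_eq ?_
        rw [norm_inv, Complex.norm_real, Real.norm_of_nonneg hK.le]
    _ = (1 + K * ‖ℓ w‖) / ‖ℓ w‖ := by field_simp
    _ ≤ (1 + K * (‖ℓ‖ * ε)) / ‖ℓ w‖ := by gcongr; exact ℓ.le_opNorm_of_le hwε.le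
    _ = (1 + K * ‖ℓ‖ * ε) / ‖ℓ w‖ := by rw [mul_assoc K]

theorem le_re_inv_inv_normal (hD : IsModelDomain Ω ℓ c K ε) (hw : w ∈ Ω) (hwε : ‖w‖ < ε) :
    c * ‖w‖ ^ 2 / (1 + K * ‖ℓ‖ * ε) ^ 2 ≤ (((ℓ w)⁻¹ + K)⁻¹).re := by
  have := norm_pos_iff.2 (hD.normal_ne_zero hw hwε)
  have hK := hD.K_pos
  have hε := hD.ε_pos
  have hc := hD.c_pos
  have hne : 0 < ‖(ℓ w)⁻¹ + K‖ :=
    (hD.re_inv_normal_pos hw hwε).trans_le (Complex.re_le_norm _)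
  rw [Complex.inv_re, Complex.normSq_eq_norm_sq, div_le_div_iff₀ (by positivity) (by positivity)]
  calc c * ‖w‖ ^ 2 * ‖(ℓ w)⁻¹ + K‖ ^ 2 ≤ c * ‖w‖ ^ 2 * ((1 + K * ‖ℓ‖ * ε) / ‖ℓ w‖) ^ 2 := by
        gcongr; exact hD.norm_inv_normal_add_le hw hwε
    _ = c * ‖w‖ ^ 2 / ‖ℓ w‖ ^ 2 * (1 + K * ‖ℓ‖ * ε) ^ 2 := by rw [div_pow]; ring
    _ ≤ _ := by gcongr; exact hD.le_re_inv_normal hw hwε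

theorem exists_norm_le (hD : IsModelDomain Ω ℓ c K ε) : ∃ B : ℝ, 0 < B ∧ ∀ z ∈ Ω, ‖z‖ ≤ B := by
  obtain ⟨B, hB⟩ := hD.isBounded.exists_norm_le
  exact ⟨max B 1, by positivity, fun z hz => (hB z hz).trans (le_max_left _ _)⟩

theorem ne_zero_of_lt_re (hD : IsModelDomain Ω ℓ c K ε) (hX : K * ‖u‖ ^ 2 < X.re) : X ≠ 0 := by
  have := hD.K_pos
  rintro rfl
  exact hX.not_ge (by simpa using by positivity)

theorem inv_smul_mem (hD : IsModelDomain Ω ℓ c K ε) (hu : ℓ u = 1) (hX : K * ‖u‖ ^ 2 < X.re) :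
    X⁻¹ • u ∈ Ω := by
  have hX0 : 0 < ‖X‖ := norm_pos_iff.2 (hD.ne_zero_of_lt_re hX)
  apply hD.inner
  rw [map_smul, hu, smul_eq_mul, mul_one, norm_smul, norm_inv, Complex.inv_re,
    Complex.normSq_eq_norm_sq, mul_pow, inv_pow, lt_div_iff₀ (by positivity)]
  calc _ = K * ‖u‖ ^ 2 := by field_simp
    _ < _ := hX

theorem norm_inv_sub_le {a : ℂ} (hX : 0 < ‖X‖) (hKX : K ≤ ‖X‖)
    (ha : ‖a * X - 1‖ * ‖X‖ ≤ K / 2) : ‖a⁻¹ - X‖ ≤ K := by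
  have hsmall : ‖a * X - 1‖ ≤ 1 / 2 := by
    by_contra! h
    nlinarith
  have hhalf : 1 / 2 ≤ ‖a * X‖ := by
    have := norm_sub_norm_le (1 : ℂ) (a * X)
    rw [norm_one, norm_sub_rev] at this
    linarith
  have hne : a * X ≠ 0 := norm_pos_iff.1 (by linarith)
  have ha0 : a ≠ 0 := left_ne_zero_of_mul hne
  have hfactor : (a⁻¹ - X) * (a * X) = -((a * X - 1) * X) := by field_simp; ring
  have hnorm : ‖a⁻¹ - X‖ * ‖a * X‖ ≤ K / 2 := by
    rw [← norm_mul, hfactor, norm_neg, norm_mul]; exact ha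
  nlinarith [norm_nonneg (a⁻¹ - X)]

theorem exists_isHorodisc (hD : IsModelDomain Ω ℓ c K ε) (hB : ∀ z ∈ Ω, ‖z‖ ≤ B) (hu : ℓ u = 1)
    (hf : IsTangentSelfMap Ω f) :
    ∃ R, IsHorodisc (fun X : ℂ => f (X⁻¹ • u)) (fun X => (ℓ (f (X⁻¹ • u)))⁻¹ + K)
      (K * ‖u‖ ^ 2) R B ε (c * (ε / 4) ^ 2 / (1 + K * ‖ℓ‖ * ε) ^ 2) := by
  have hK := hD.K_pos
  have hc := hD.c_pos
  have hε := hD.ε_pos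
  have hfmem : ∀ {X : ℂ}, K * ‖u‖ ^ 2 < X.re → f (X⁻¹ • u) ∈ Ω := fun hX =>
    hf.mapsTo (hD.inv_smul_mem hu hX)
  have hd : ∀ {X : ℂ}, K * ‖u‖ ^ 2 < X.re → DifferentiableAt ℂ (fun X : ℂ => f (X⁻¹ • u)) X :=
    fun {X} hX => (hf.differentiableOn.differentiableAt
      (hD.isOpen.mem_nhds (hD.inv_smul_mem hu hX))).comp X
        ((differentiableAt_inv (hD.ne_zero_of_lt_re hX)).smul_const u)
  obtain ⟨R, -, hR⟩ := hasBasis_cobounded_norm.eventually_iff.1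
    ((IsTangentSelfMap.eventually_cobounded_inv_smul
      (hf.eventually_norm_lt (half_pos hε)) u).and
      (hf.eventually_norm_normal_mul_sub_one_le hu (half_pos hK)))
  refine ⟨max R K, by positivity, hd, fun hX => hB _ (hfmem hX), fun hX hXε => ?_,
    fun hX hXε => hD.re_inv_normal_pos (hfmem hX) hXε, fun hX hXε hXε4 => ?_,
    fun hX hXR => ?_, fun {X} hX hXR => ?_⟩
  · exact ((ℓ.differentiableAt.comp _ (hd hX)).inv
      (hD.normal_ne_zero (hfmem hX) hXε)).add_const _
  · refine le_trans ?_ (hD.le_re_inv_inv_normal (hfmem hX) hXε)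
    gcongr
  · exact (hR ((le_max_left R K).trans hXR)).1 (hD.inv_smul_mem hu hX)
  · have hclose := (hR ((le_max_left R K).trans hXR)).2 (hD.inv_smul_mem hu hX)
    have hXre := (Complex.abs_re_le_norm _).trans
      (norm_inv_sub_le (norm_pos_iff.2 (hD.ne_zero_of_lt_re hX)) ((le_max_right R K).trans hXR)
        hclose)
    rw [Complex.sub_re, abs_le] at hXre
    rw [Complex.add_re, Complex.ofReal_re]
    linarith

theorem exists_re_sub_le_along_disc (hD : IsModelDomain Ω ℓ c K ε) :
    ∃ T > 0, ∀ f, IsTangentSelfMap Ω f → ∀ (u : E) (X : ℂ), ℓ u = 1 →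
      2 * (K * ‖u‖ ^ 2) + T ≤ X.re →
      ‖f (X⁻¹ • u)‖ < ε ∧ X.re - (2 * (K * ‖u‖ ^ 2) + T + K) ≤ ((ℓ (f (X⁻¹ • u)))⁻¹).re := by
  have hK := hD.K_pos
  have hε := hD.ε_pos
  have hc := hD.c_pos
  obtain ⟨B, hB, hΩB⟩ := hD.exists_norm_le
  have hκ : 0 < c * (ε / 4) ^ 2 / (1 + K * ‖ℓ‖ * ε) ^ 2 := by positivity
  refine ⟨_, IsHorodisc.horosphereConst_pos hB hε hκ, fun f hf u X hu hX => ?_⟩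
  obtain ⟨R, hdisc⟩ := hD.exists_isHorodisc hΩB hu hf
  have hre := hdisc.re_sub_le hB hε hκ hX
  rw [Complex.add_re, Complex.ofReal_re] at hre
  exact ⟨(hdisc.norm_lt_of_le_re hB hε hκ hX).trans (by linarith), by linarith⟩

-- The point `z` is reached along the disc `X ↦ X⁻¹ • u`, `u = (ℓ z)⁻¹ • z`, at `X = (ℓ z)⁻¹`.
theorem exists_horosphere (hD : IsModelDomain Ω ℓ c K ε) :
    ∃ C₁ : ℝ, K ≤ C₁ ∧ ∀ f, IsTangentSelfMap Ω f → ∀ z, C₁ * ‖z‖ ^ 2 < (ℓ z).re →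
      ‖f z‖ < ε ∧ (ℓ z).re - C₁ * ‖z‖ ^ 2 ≤ ‖ℓ z‖ ^ 2 * ((ℓ (f z))⁻¹).re := by
  have hK := hD.K_pos
  obtain ⟨T, hT, hdisc⟩ := hD.exists_re_sub_le_along_disc
  set C₁ := 2 * K + (T + K) * ‖ℓ‖ ^ 2 with hC₁
  have hKC₁ : K ≤ C₁ := by linarith [show 0 ≤ (T + K) * ‖ℓ‖ ^ 2 by positivity]
  refine ⟨C₁, hKC₁, fun f hf z hz => ?_⟩
  have hℓz : ℓ z ≠ 0 := fun h0 => by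
    rw [h0, Complex.zero_re] at hz
    exact hz.not_ge (mul_nonneg (hK.le.trans hKC₁) (sq_nonneg _))
  set u : E := (ℓ z)⁻¹ • z
  have hu : ℓ u = 1 := by rw [map_smul, smul_eq_mul, inv_mul_cancel₀ hℓz]
  have hℓu : 1 ≤ ‖ℓ‖ ^ 2 * ‖u‖ ^ 2 := by
    rw [← mul_pow]
    exact one_le_pow₀ (by simpa [hu] using ℓ.le_opNorm u)
  have hcmp : 2 * (K * ‖u‖ ^ 2) + T + K ≤ C₁ * ‖u‖ ^ 2 := by rw [hC₁]; nlinarith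
  have hscale : (ℓ z).re - C₁ * ‖z‖ ^ 2 = ‖ℓ z‖ ^ 2 * (((ℓ z)⁻¹).re - C₁ * ‖u‖ ^ 2) := by
    rw [Complex.inv_re, Complex.normSq_eq_norm_sq, norm_smul, norm_inv]
    field_simp
  have hlt : C₁ * ‖u‖ ^ 2 < ((ℓ z)⁻¹).re :=
    sub_pos.1 (pos_of_mul_pos_right (hscale ▸ sub_pos.2 hz) (sq_nonneg _))
  obtain ⟨hnorm, hre⟩ := hdisc f hf u (ℓ z)⁻¹ hu (by linarith)
  rw [show (ℓ z)⁻¹⁻¹ • u = z by rw [inv_inv, smul_inv_smul₀ hℓz]] at hnorm hre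
  exact ⟨hnorm, hscale ▸ mul_le_mul_of_nonneg_left (by linarith) (sq_nonneg _)⟩

end IsModelDomain

end Model

/-! ### Iterates along a ray into the domain -/

section Ray

variable {E : Type*} [NormedAddCommGroup E]

theorem norm_iterate_sub_le {F : E → E} {x w : E} {r η : ℝ} (hη : ∀ y ∈ ball x r, ‖F y - y‖ ≤ η)
    (hw : w ∈ ball x (r / 2)) {k : ℕ} (hk : k * η ≤ r / 2) : ‖F^[k] w - w‖ ≤ k * η := by
  have hr : 0 < r / 2 := nonempty_ball.1 ⟨w, hw⟩
  have hη₀ : 0 ≤ η := (norm_nonneg _).trans (hη x (mem_ball_self (by linarith)))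
  induction k with
  | zero => simp
  | succ k ih =>
    push_cast at hk ⊢
    have hstep : ‖F^[k] w - w‖ ≤ k * η := ih (by linarith)
    have hmem : F^[k] w ∈ ball x r := by
      rw [mem_ball_iff_norm] at hw ⊢
      linarith [norm_sub_le_norm_sub_add_norm_sub (F^[k] w) w x]
    rw [iterate_succ_apply']
    linarith [hη _ hmem, norm_sub_le_norm_sub_add_norm_sub (F (F^[k] w)) (F^[k] w) w]

variable [NormedSpace ℂ E] {Ω : Set E} {ℓ : E →L[ℂ] ℂ} {c K ε a s : ℝ} {F : E → E} {u w : E}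

theorem norm_lt_of_mem_ball_smul (hs : 0 < s) (hw : w ∈ ball ((s : ℂ) • u) (a * s)) :
    ‖w‖ < (‖u‖ + a) * s := by
  have hcenter : ‖(s : ℂ) • u‖ = s * ‖u‖ := by
    rw [norm_smul, Complex.norm_real, Real.norm_of_nonneg hs.le]
  rw [mem_ball_iff_norm] at hw
  linarith [norm_sub_norm_le w ((s : ℂ) • u)]

namespace IsModelDomain

theorem ball_smul_subset (hD : IsModelDomain Ω ℓ c K ε) (hu : ℓ u = 1) (ha : ‖ℓ‖ * a ≤ 1 / 2)
    (hs : 0 < s) (hsmall : K * (‖u‖ + a) ^ 2 * s ≤ 1 / 2) : ball ((s : ℂ) • u) (a * s) ⊆ Ω := by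
  intro w hw
  have hK := hD.K_pos
  have hnormal : ‖ℓ (w - (s : ℂ) • u)‖ ≤ s / 2 :=
    calc ‖ℓ (w - (s : ℂ) • u)‖ ≤ ‖ℓ‖ * (a * s) := ℓ.le_opNorm_of_le (mem_ball_iff_norm.1 hw).le
      _ = ‖ℓ‖ * a * s := by ring
      _ ≤ 1 / 2 * s := by gcongr
      _ = s / 2 := by ring
  have hre : s / 2 ≤ (ℓ w).re := by
    have habs := abs_le.1 ((Complex.abs_re_le_norm _).trans hnormal)
    rw [map_sub, map_smul, hu, smul_eq_mul, mul_one, Complex.sub_re, Complex.ofReal_re] at habs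
    linarith [habs.1]
  refine hD.inner w ?_
  calc K * ‖w‖ ^ 2 < K * ((‖u‖ + a) * s) ^ 2 := by
        gcongr; exact norm_lt_of_mem_ball_smul hs hw
    _ = K * (‖u‖ + a) ^ 2 * s * s := by ring
    _ ≤ 1 / 2 * s := by gcongr
    _ ≤ (ℓ w).re := by linarith

theorem exists_ball_along_ray (hD : IsModelDomain Ω ℓ c K ε) (hu : ℓ u = 1)
    (hF : IsTangentSelfMap Ω F) :
    ∃ a > 0, ∀ δ > 0, ∀ᶠ s : ℝ in 𝓝[>] 0, 0 < s ∧ ball ((s : ℂ) • u) (a * s) ⊆ Ω ∧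
      ∀ w ∈ ball ((s : ℂ) • u) (a * s), ‖F w - w‖ ≤ δ * s ^ 2 := by
  obtain ⟨a, ha₀, ha⟩ := exists_pos_mul_lt (show (0 : ℝ) < 1 / 2 by norm_num) ‖ℓ‖
  refine ⟨a, ha₀, fun δ hδ => ?_⟩
  have : 0 < ‖u‖ + a := by positivity
  have hK := hD.K_pos
  obtain ⟨η, hη, hηF⟩ := Metric.mem_nhdsWithin_iff.1
    (hF.isLittleO.def (show 0 < δ / (‖u‖ + a) ^ 2 by positivity))
  filter_upwards [self_mem_nhdsWithin, nhdsWithin_le_nhds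
      (gt_mem_nhds (show 0 < 1 / 2 / (K * (‖u‖ + a) ^ 2) by positivity)),
    nhdsWithin_le_nhds (gt_mem_nhds (show 0 < η / (‖u‖ + a) by positivity))] with s hs hsK hsη
  rw [lt_div_iff₀' (by positivity)] at hsK hsη
  have hsub := hD.ball_smul_subset hu ha.le hs hsK.le
  refine ⟨hs, hsub, fun w hw => ?_⟩
  have hnorm : ‖w‖ < (‖u‖ + a) * s := norm_lt_of_mem_ball_smul hs hw
  have hFw : ‖F w - w‖ ≤ δ / (‖u‖ + a) ^ 2 * ‖‖w‖ ^ 2‖ :=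
    hηF ⟨mem_ball_zero_iff.2 (hnorm.trans hsη), hsub hw⟩
  calc ‖F w - w‖ ≤ δ / (‖u‖ + a) ^ 2 * ‖w‖ ^ 2 := by rwa [norm_pow, norm_norm] at hFw
    _ ≤ δ / (‖u‖ + a) ^ 2 * ((‖u‖ + a) * s) ^ 2 := by gcongr
    _ = δ * s ^ 2 := by field_simp

theorem eventually_norm_fderiv_iterate_sub_le (hD : IsModelDomain Ω ℓ c K ε) (hu : ℓ u = 1)
    (hF : IsTangentSelfMap Ω F) {M δ : ℝ} (hδ : 0 < δ) :
    ∀ᶠ s : ℝ in 𝓝[>] 0, ∀ k : ℕ, k * s ≤ M →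
      ‖fderiv ℂ F^[k] ((s : ℂ) • u) - ContinuousLinearMap.id ℂ E‖ ≤ δ := by
  obtain ⟨a, ha, hray⟩ := hD.exists_ball_along_ray hu hF
  obtain ⟨η, hη, hηM⟩ := exists_pos_mul_lt (show 0 < min (a / 2) (δ * (a / 4)) by positivity) M
  filter_upwards [hray η hη] with s ⟨hs, hsub, hclose⟩ k hk
  have hr : 0 < a * s / 2 := by positivity
  have hdrift : k * (η * s ^ 2) ≤ M * η * s :=
    calc k * (η * s ^ 2) = k * s * η * s := by ring
      _ ≤ M * η * s := by gcongr
  have hdrift_le_radius : k * (η * s ^ 2) ≤ a * s / 2 :=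
    calc k * (η * s ^ 2) ≤ a / 2 * s := hdrift.trans (by gcongr; exact (lt_min_iff.1 hηM).1.le)
      _ = a * s / 2 := by ring
  have hsub' : ball ((s : ℂ) • u) (a * s / 2) ⊆ Ω := (ball_subset_ball (by linarith)).trans hsub
  have hdk : DifferentiableOn ℂ F^[k] Ω := (hF.iterate k).differentiableOn
  have hfderiv : fderiv ℂ (fun w => F^[k] w - w) ((s : ℂ) • u) =
      fderiv ℂ F^[k] ((s : ℂ) • u) - ContinuousLinearMap.id ℂ E := by
    rw [fderiv_fun_sub (hdk.differentiableAt (hD.isOpen.mem_nhds (hsub' (mem_ball_self hr))))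
      differentiableAt_fun_id, fderiv_fun_id]
  rw [← hfderiv]
  calc ‖fderiv ℂ (fun w => F^[k] w - w) ((s : ℂ) • u)‖ ≤ 2 * (k * (η * s ^ 2)) / (a * s / 2) :=
        norm_fderiv_le_of_norm_le_on_ball hr ((hdk.mono hsub').fun_sub differentiableOn_id)
          fun w hw => norm_iterate_sub_le hclose hw hdrift_le_radius
    _ ≤ 2 * (M * η * s) / (a * s / 2) := by gcongr
    _ ≤ 2 * (δ * (a / 4) * s) / (a * s / 2) := by
        gcongr ?_ / _; gcongr 2 * (?_ * s); exact (lt_min_iff.1 hηM).2.le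
    _ = δ := by field_simp; norm_num

theorem eventually_half_le_norm_det_fderiv_iterate (hD : IsModelDomain Ω ℓ c K ε) (hu : ℓ u = 1)
    (hF : IsTangentSelfMap Ω F) (M : ℝ) :
    ∀ᶠ s : ℝ in 𝓝[>] 0, ∀ k : ℕ, k * s ≤ M → 1 / 2 ≤ ‖(fderiv ℂ F^[k] ((s : ℂ) • u)).det‖ := by
  have hdet : ∀ᶠ T : E →L[ℂ] E in 𝓝 (ContinuousLinearMap.id ℂ E), 1 / 2 < ‖T.det‖ := by
    refine ContinuousLinearMap.continuous_det.norm.continuousAt.eventually_const_lt ?_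
    norm_num [ContinuousLinearMap.det]
  obtain ⟨δ, hδ, hball⟩ := Metric.eventually_nhds_iff_ball.1 hdet
  filter_upwards [hD.eventually_norm_fderiv_iterate_sub_le hu hF (M := M) (half_pos hδ)]
    with s hs k hk
  exact (hball _ (mem_ball_iff_norm.2 ((hs k hk).trans_lt (half_lt_self hδ)))).le

end IsModelDomain

end Ray

/-! ### Determinant bounds by anisotropic rescaling -/

section Dilation

variable {E : Type*} [NormedAddCommGroup E] [NormedSpace ℂ E]

/-- The projection onto the complex tangent space `ker ℓ` along the vector `e`, where `ℓ e = 1`. -/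
def tangentialProj (ℓ : E →L[ℂ] ℂ) (e : E) : E →L[ℂ] E :=
  ContinuousLinearMap.id ℂ E - ℓ.smulRight e

/-- The anisotropic dilation scaling the normal direction `e` by `b ^ 2` and the tangent space
`ker ℓ` by `b`. -/
def dilation (ℓ : E →L[ℂ] ℂ) (e : E) (b : ℝ) : E →L[ℂ] E :=
  ((b ^ 2 : ℝ) : ℂ) • ℓ.smulRight e + (b : ℂ) • tangentialProj ℓ e

/-- The sum of the norms of the two summands of the splitting `E = ℂ e ⊕ ker ℓ`. -/
def splittingNorm (ℓ : E →L[ℂ] ℂ) (e : E) : ℝ :=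
  ‖ℓ.smulRight e‖ + ‖tangentialProj ℓ e‖

variable {ℓ : E →L[ℂ] ℂ} {e y z η : E} {a b t : ℝ}

theorem tangentialProj_apply (x : E) : tangentialProj ℓ e x = x - ℓ x • e := by
  simp [tangentialProj]

theorem dilation_apply :
    dilation ℓ e b z = ((b ^ 2 : ℝ) : ℂ) • ℓ z • e + (b : ℂ) • (z - ℓ z • e) := by
  simp [dilation, tangentialProj_apply]

theorem normal_dilation (he : ℓ e = 1) : ℓ (dilation ℓ e b z) = ((b ^ 2 : ℝ) : ℂ) * ℓ z := by
  simp [dilation_apply, he]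

theorem dilation_comp (he : ℓ e = 1) (a b : ℝ) :
    (dilation ℓ e a).comp (dilation ℓ e b) = dilation ℓ e (a * b) := by
  ext z
  rw [ContinuousLinearMap.comp_apply, dilation_apply (b := a), normal_dilation he,
    dilation_apply, dilation_apply]
  push_cast
  module

theorem dilation_one : dilation ℓ e 1 = ContinuousLinearMap.id ℂ E := by
  ext z
  simp [dilation_apply]

theorem norm_dilation_le (hb : 0 ≤ b) (hbt : b ≤ t) (hbt' : b ^ 2 ≤ t) :
    ‖dilation ℓ e b‖ ≤ t * splittingNorm ℓ e := by
  refine (norm_add_le _ _).trans ?_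
  rw [norm_smul, norm_smul, Complex.norm_real, Complex.norm_real, Real.norm_of_nonneg hb,
    Real.norm_of_nonneg (by positivity), splittingNorm, mul_add]
  gcongr

theorem exists_norm_det_dilation_le [FiniteDimensional ℂ E] (ℓ : E →L[ℂ] ℂ) (e : E) :
    ∃ C > 0, ∀ b : ℝ, 1 ≤ b → ‖(dilation ℓ e b).det‖ ≤ C * (b ^ 2) ^ Module.finrank ℂ E := by
  obtain ⟨C, hC, hdet⟩ := exists_norm_det_le E (splittingNorm ℓ e)
  refine ⟨C, hC, fun b hb => ?_⟩
  have hb₀ : 0 < b := one_pos.trans_le hb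
  have hscaled := hdet ((((b ^ 2)⁻¹ : ℝ) : ℂ) • dilation ℓ e b) (by
    rw [norm_smul, Complex.norm_real, Real.norm_of_nonneg (by positivity),
      inv_mul_le_iff₀ (by positivity)]
    exact norm_dilation_le hb₀.le (le_self_pow₀ hb two_ne_zero) le_rfl)
  rwa [ContinuousLinearMap.det, ContinuousLinearMap.toLinearMap_smul, LinearMap.det_smul,
    norm_mul, norm_pow, Complex.norm_real, Real.norm_of_nonneg (by positivity), inv_pow,
    inv_mul_le_iff₀ (by positivity), mul_comm] at hscaled

theorem norm_normal_dilation_le (he : ℓ e = 1) (hη : ‖ℓ η‖ ≤ 1 / 4) :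
    ‖ℓ (dilation ℓ e b η)‖ ≤ b ^ 2 / 4 := by
  rw [normal_dilation he, norm_mul, Complex.norm_real, Real.norm_of_nonneg (sq_nonneg b)]
  linarith [mul_le_mul_of_nonneg_left hη (sq_nonneg b)]

theorem le_re_normal_add_dilation (he : ℓ e = 1) (hb : b ^ 2 ≤ (ℓ z).re) (hη : ‖ℓ η‖ ≤ 1 / 4) :
    3 / 4 * b ^ 2 ≤ (ℓ (z + dilation ℓ e b η)).re := by
  have habs := (Complex.abs_re_le_norm _).trans (norm_normal_dilation_le (b := b) he hη)
  rw [map_add, Complex.add_re]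
  linarith [(abs_le.1 habs).1]

theorem norm_normal_add_dilation_le (he : ℓ e = 1) (hb : b ^ 2 ≤ (ℓ z).re) (hη : ‖ℓ η‖ ≤ 1 / 4) :
    ‖ℓ (z + dilation ℓ e b η)‖ ≤ 2 * ‖ℓ z‖ := by
  rw [map_add]
  linarith [norm_add_le (ℓ z) (ℓ (dilation ℓ e b η)), norm_normal_dilation_le (b := b) he hη,
    Complex.re_le_norm (ℓ z), norm_nonneg (ℓ z)]

theorem mul_norm_sq_add_dilation_le {C r : ℝ} (hC : 0 ≤ C) (hb : 0 ≤ b) (hb₁ : b ≤ 1)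
    (hz : 16 * C * ‖z‖ ^ 2 ≤ b ^ 2) (hη : ‖η‖ ≤ r) (hr : 16 * C * (splittingNorm ℓ e * r) ^ 2 ≤ 1) :
    C * ‖z + dilation ℓ e b η‖ ^ 2 ≤ b ^ 2 / 4 := by
  have hdil : ‖dilation ℓ e b η‖ ≤ b * splittingNorm ℓ e * r :=
    (dilation ℓ e b).le_of_opNorm_le_of_le
      (norm_dilation_le hb le_rfl (pow_le_of_le_one hb hb₁ two_ne_zero)) hη
  calc C * ‖z + dilation ℓ e b η‖ ^ 2 ≤ C * (‖z‖ + b * splittingNorm ℓ e * r) ^ 2 := by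
        gcongr; exact (norm_add_le _ _).trans (by gcongr)
    _ ≤ C * (2 * (‖z‖ ^ 2 + (b * splittingNorm ℓ e * r) ^ 2)) := by gcongr; exact add_sq_le
    _ = (16 * C * ‖z‖ ^ 2 + b ^ 2 * (16 * C * (splittingNorm ℓ e * r) ^ 2)) / 8 := by ring
    _ ≤ (b ^ 2 + b ^ 2 * 1) / 8 := by gcongr
    _ = b ^ 2 / 4 := by ring

theorem norm_dilation_inv_le {A B : ℝ} (ha : 0 < a) (hℓy : ‖ℓ y‖ ≤ A * a ^ 2)
    (hy : ‖y‖ ≤ B * a) :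
    ‖dilation ℓ e a⁻¹ y‖ ≤ A * ‖e‖ + ‖tangentialProj ℓ e‖ * B := by
  rw [dilation_apply]
  refine (norm_add_le _ _).trans (add_le_add ?_ ?_)
  · rw [norm_smul, norm_smul, Complex.norm_real, Real.norm_of_nonneg (by positivity), ← mul_assoc]
    gcongr
    rwa [inv_pow, inv_mul_le_iff₀ (by positivity), mul_comm]
  · rw [← tangentialProj_apply, norm_smul, Complex.norm_real, Real.norm_of_nonneg (by positivity),
      inv_mul_le_iff₀ ha]
    exact (ContinuousLinearMap.le_opNorm_of_le _ hy).trans_eq (by ring)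

-- The Jacobian at `z` is that of the map rescaled by `b` at the source and by `a` at the target.
theorem exists_det_fderiv_eq_det_mul_det_dilation (he : ℓ e = 1) {f : E → E} {Ω : Set E} {r M : ℝ}
    (hΩ : IsOpen Ω) (hf : DifferentiableOn ℂ f Ω) (ha : a ≠ 0) (hb : b ≠ 0) (hr : 0 < r)
    (hmem : ∀ η ∈ ball (0 : E) r, z + dilation ℓ e b η ∈ Ω)
    (hM : ∀ η ∈ ball (0 : E) r, ‖dilation ℓ e a⁻¹ (f (z + dilation ℓ e b η))‖ ≤ M) :
    ∃ T : E →L[ℂ] E, ‖T‖ ≤ 2 * M / r ∧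
      (fderiv ℂ f z).det = T.det * (dilation ℓ e (a / b)).det := by
  have hzΩ : z ∈ Ω := by simpa using hmem 0 (mem_ball_self hr)
  set T : E →L[ℂ] E := (dilation ℓ e a⁻¹).comp ((fderiv ℂ f z).comp (dilation ℓ e b))
  have hT : HasFDerivAt (fun η => dilation ℓ e a⁻¹ (f (z + dilation ℓ e b η))) T 0 := by
    have hsource : HasFDerivAt (fun η => z + dilation ℓ e b η) (dilation ℓ e b) 0 :=
      (dilation ℓ e b).hasFDerivAt.const_add z
    have hf' : HasFDerivAt f (fderiv ℂ f z) (z + dilation ℓ e b 0) := by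
      simpa using (hf.differentiableAt (hΩ.mem_nhds hzΩ)).hasFDerivAt
    exact (dilation ℓ e a⁻¹).hasFDerivAt.comp 0 (hf'.comp 0 hsource)
  refine ⟨T, ?_, ?_⟩
  · rw [← hT.fderiv]
    exact norm_fderiv_le_of_norm_le_on_ball hr
      ((dilation ℓ e a⁻¹).differentiable.comp_differentiableOn (hf.comp (by fun_prop) hmem)) hM
  · have hdet : ∀ S S' : E →L[ℂ] E, (S.comp S').det = S.det * S'.det := fun S S' =>
      LinearMap.det_comp S.toLinearMap S'.toLinearMap
    have hcancel :
        (dilation ℓ e a⁻¹).det * (dilation ℓ e b).det * (dilation ℓ e (a / b)).det = 1 := by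
      rw [← hdet, ← hdet, dilation_comp he, dilation_comp he,
        show a⁻¹ * b * (a / b) = 1 by field_simp, dilation_one]
      simp [ContinuousLinearMap.det]
    rw [hdet, hdet]
    linear_combination -(fderiv ℂ f z).det * hcancel

theorem norm_normal_le_sqrt_re (hz : ‖ℓ‖ ^ 2 * ‖z‖ ^ 2 ≤ (ℓ z).re) : ‖ℓ z‖ ≤ √(ℓ z).re := by
  refine Real.le_sqrt_of_sq_le (le_trans ?_ hz)
  rw [← mul_pow]
  gcongr
  exact ℓ.le_opNorm z

end Dilation

theorem sqrt_re_le_one_of_norm_le {x : ℂ} (hx : 0 < x.re) (hle : ‖x‖ ≤ √x.re) : √x.re ≤ 1 := by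
  have hmul : √x.re * √x.re ≤ √x.re * 1 := by
    rw [Real.mul_self_sqrt hx.le, mul_one]
    exact (Complex.re_le_norm x).trans hle
  exact le_of_mul_le_mul_left hmul (Real.sqrt_pos.2 hx)

theorem norm_le_div_of_le_mul_re_inv {x : ℂ} {A t : ℝ} (ht : 0 < t) (hA : 0 ≤ A)
    (h : t ≤ A * (x⁻¹).re) : ‖x‖ ≤ A / t := by
  rcases eq_or_ne x 0 with rfl | hx
  · simpa using by positivity
  have hle : t ≤ A / ‖x‖ := by
    rw [div_eq_mul_inv, ← norm_inv]
    exact h.trans (by gcongr; exact Complex.re_le_norm _)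
  have := norm_pos_iff.2 hx
  rw [le_div_iff₀ ht]
  rwa [le_div_iff₀ this, mul_comm] at hle

namespace IsModelDomain

variable {E : Type*} [NormedAddCommGroup E] [NormedSpace ℂ E]
  {Ω : Set E} {ℓ : E →L[ℂ] ℂ} {c K ε a : ℝ} {f : E → E} {e w y z : E}

theorem norm_le_sqrt_mul (hD : IsModelDomain Ω ℓ c K ε) (hy : y ∈ Ω) (hyε : ‖y‖ < ε) (ha : 0 ≤ a)
    (ha₁ : a ≤ 1) (hℓy : ‖ℓ y‖ ≤ 8 * a ^ 2) : ‖y‖ ≤ √((8 + 64 * K) / c) * a := by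
  have hK := hD.K_pos
  rw [← Real.sqrt_sq ha, ← Real.sqrt_mul (div_pos (by positivity) hD.c_pos).le]
  refine Real.le_sqrt_of_sq_le ?_
  rw [div_mul_eq_mul_div, le_div_iff₀' hD.c_pos]
  calc c * ‖y‖ ^ 2 ≤ (ℓ y).re + K * ‖ℓ y‖ ^ 2 := hD.outer y hy hyε
    _ ≤ 8 * a ^ 2 + K * (8 * a ^ 2) ^ 2 := by
        gcongr; exact (Complex.re_le_norm _).trans hℓy
    _ = (8 + 64 * K * a ^ 2) * a ^ 2 := by ring
    _ ≤ (8 + 64 * K) * a ^ 2 := by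
        gcongr (8 + ?_) * _
        exact mul_le_of_le_one_right (by positivity) (pow_le_one₀ ha ha₁)

-- In rescaled coordinates, the horosphere estimate puts the image of a box of size `√(Re ℓ z)`
-- at `z` into a box of size `‖ℓ z‖ / √(Re ℓ z)` at the origin.
theorem exists_norm_dilation_image_le (hD : IsModelDomain Ω ℓ c K ε) (he : ℓ e = 1) :
    ∃ κ, K < κ ∧ ∃ r > 0, ∃ M, ∀ f, IsTangentSelfMap Ω f →
      ∀ z, 0 < (ℓ z).re → κ * ‖z‖ ^ 2 ≤ (ℓ z).re → ∀ η ∈ ball (0 : E) r,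
        z + dilation ℓ e √(ℓ z).re η ∈ Ω ∧
          ‖dilation ℓ e (‖ℓ z‖ / √(ℓ z).re)⁻¹ (f (z + dilation ℓ e √(ℓ z).re η))‖ ≤ M := by
  obtain ⟨C₁, hKC₁, hhor⟩ := hD.exists_horosphere
  have hC₁ : 0 < C₁ := hD.K_pos.trans_le hKC₁
  obtain ⟨r, ⟨hrℓ, hrN⟩, hr⟩ : ∃ r : ℝ, (‖ℓ‖ * r < 1 / 4 ∧
      16 * C₁ * (splittingNorm ℓ e * r) ^ 2 < 1) ∧ 0 < r := by
    refine (((Continuous.tendsto' (by fun_prop) 0 0 (by simp)).eventually_lt_const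
      (by norm_num)).and ((Continuous.tendsto' (by fun_prop) 0 0 (by simp)).eventually_lt_const
      one_pos)).filter_mono nhdsWithin_le_nhds |>.and self_mem_nhdsWithin |>.exists (f := 𝓝[>] 0)
  refine ⟨max (16 * C₁) (‖ℓ‖ ^ 2), lt_max_of_lt_left (by linarith), r, hr,
    8 * ‖e‖ + ‖tangentialProj ℓ e‖ * √((8 + 64 * K) / c), ?_⟩
  intro f hf z hz hκ η hη
  set b : ℝ := √(ℓ z).re
  have hb : 0 < b := Real.sqrt_pos.2 hz
  have hb₂ : b ^ 2 = (ℓ z).re := Real.sq_sqrt hz.le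
  have hℓz : 0 < ‖ℓ z‖ := hz.trans_le (Complex.re_le_norm _)
  have hℓz_le : ‖ℓ z‖ ≤ b :=
    norm_normal_le_sqrt_re (le_trans (by gcongr; exact le_max_right _ _) hκ)
  have hb₁ : b ≤ 1 := sqrt_re_le_one_of_norm_le hz hℓz_le
  have hηr : ‖η‖ ≤ r := (mem_ball_zero_iff.1 hη).le
  have hℓη : ‖ℓ η‖ ≤ 1 / 4 := (ℓ.le_opNorm_of_le hηr).trans hrℓ.le
  set w := z + dilation ℓ e b η
  have hw_re : 3 / 4 * b ^ 2 ≤ (ℓ w).re := le_re_normal_add_dilation he hb₂.le hℓη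
  have hw_norm : C₁ * ‖w‖ ^ 2 ≤ b ^ 2 / 4 :=
    mul_norm_sq_add_dilation_le hC₁.le hb.le hb₁ (hb₂ ▸ le_trans (by gcongr; exact le_max_left _ _)
      hκ) hηr hrN.le
  have : 0 < b ^ 2 := by positivity
  have hw : w ∈ Ω := hD.inner w (lt_of_le_of_lt (by gcongr) (show C₁ * ‖w‖ ^ 2 < _ by linarith))
  obtain ⟨hfε, hfhor⟩ := hhor f hf w (by linarith)
  have hfℓ : ‖ℓ (f w)‖ ≤ 8 * (‖ℓ z‖ / b) ^ 2 :=
    calc ‖ℓ (f w)‖ ≤ ‖ℓ w‖ ^ 2 / (b ^ 2 / 2) :=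
          norm_le_div_of_le_mul_re_inv (by positivity) (by positivity) (by linarith)
      _ ≤ (2 * ‖ℓ z‖) ^ 2 / (b ^ 2 / 2) := by
          gcongr; exact norm_normal_add_dilation_le he hb₂.le hℓη
      _ = 8 * (‖ℓ z‖ / b) ^ 2 := by field_simp; norm_num
  exact ⟨hw, norm_dilation_inv_le (by positivity) hfℓ (hD.norm_le_sqrt_mul (hf.mapsTo hw) hfε
    (by positivity) ((div_le_one hb).2 hℓz_le) hfℓ)⟩

theorem exists_norm_det_fderiv_le [FiniteDimensional ℂ E] (hD : IsModelDomain Ω ℓ c K ε)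
    (he : ℓ e = 1) :
    ∃ κ, K < κ ∧ ∃ C > 0, ∀ f, IsTangentSelfMap Ω f → ∀ z, 0 < (ℓ z).re → κ * ‖z‖ ^ 2 ≤ (ℓ z).re →
      ‖(fderiv ℂ f z).det‖ ≤ C * ((‖ℓ z‖ / (ℓ z).re) ^ 2) ^ Module.finrank ℂ E := by
  obtain ⟨κ, hκ, r, hr, M, hbox⟩ := hD.exists_norm_dilation_image_le he
  obtain ⟨C, hC, hdet⟩ := exists_norm_det_le E (2 * M / r)
  obtain ⟨C', hC', hdil⟩ := exists_norm_det_dilation_le ℓ e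
  refine ⟨κ, hκ, C * C', by positivity, fun f hf z hz hzκ => ?_⟩
  have hℓz : 0 < ‖ℓ z‖ := hz.trans_le (Complex.re_le_norm _)
  have hsqrt : 0 < √(ℓ z).re := Real.sqrt_pos.2 hz
  obtain ⟨T, hT, hTdet⟩ := exists_det_fderiv_eq_det_mul_det_dilation he hD.isOpen
    hf.differentiableOn (div_pos hℓz hsqrt).ne' hsqrt.ne' hr
    (fun η hη => (hbox f hf z hz hzκ η hη).1) fun η hη => (hbox f hf z hz hzκ η hη).2
  rw [div_div, Real.mul_self_sqrt hz.le] at hTdet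
  rw [hTdet, norm_mul, mul_assoc]
  gcongr
  · exact hdet T hT
  · exact hdil _ ((one_le_div hz).2 (Complex.re_le_norm _))

end IsModelDomain

/-! ### The Jacobian determinant at the fixed point -/

section FixedPoint

variable {E : Type*} [NormedAddCommGroup E] [NormedSpace ℂ E] {Ω S : Set E} {F : E → E} {B : ℝ}
  {z₀ : E}

theorem fderiv_iterate_succ (hΩ : IsOpen Ω) (hF : DifferentiableOn ℂ F Ω) (hm : MapsTo F Ω Ω)
    {z : E} (hz : z ∈ Ω) (k : ℕ) :
    fderiv ℂ F^[k + 1] z = (fderiv ℂ F (F^[k] z)).comp (fderiv ℂ F^[k] z) := by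
  rw [iterate_succ']
  exact fderiv_comp z (hF.differentiableAt (hΩ.mem_nhds (hm.iterate k hz)))
    ((hF.iterate hm k).differentiableAt (hΩ.mem_nhds hz))

theorem norm_iterate_sub_fixedPoint_le (hF : DifferentiableOn ℂ F Ω) (hm : MapsTo F Ω Ω)
    (hB : ∀ z ∈ Ω, ‖z‖ ≤ B) (hfix : F z₀ = z₀) {r : ℝ} (hr : ball z₀ r ⊆ Ω) {w : E}
    (hw : w ∈ ball z₀ r) (k : ℕ) : ‖F^[k] w - z₀‖ ≤ 2 * B / r * ‖w - z₀‖ := by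
  have hlip := norm_sub_le_of_norm_le_on_ball ((hF.iterate hm k).mono hr)
    (fun w hw => hB _ (hm.iterate k (hr hw))) hw
  rwa [iterate_fixed hfix k] at hlip

theorem eventually_forall_iterate_mem (hΩ : IsOpen Ω) (hF : DifferentiableOn ℂ F Ω)
    (hm : MapsTo F Ω Ω) (hB : ∀ z ∈ Ω, ‖z‖ ≤ B) (hz₀ : z₀ ∈ Ω) (hfix : F z₀ = z₀)
    (hS : S ∈ 𝓝 z₀) : ∀ᶠ w in 𝓝 z₀, ∀ k, F^[k] w ∈ S := by
  obtain ⟨r₀, hr₀, hr₀Ω⟩ := Metric.isOpen_iff.1 hΩ z₀ hz₀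
  obtain ⟨r₁, hr₁, hr₁S⟩ := Metric.mem_nhds_iff.1 hS
  obtain ⟨t, ht, htr⟩ := exists_pos_mul_lt hr₁ (2 * B / r₀)
  have hB₀ : 0 ≤ B := (norm_nonneg _).trans (hB _ hz₀)
  filter_upwards [ball_mem_nhds z₀ hr₀, ball_mem_nhds z₀ ht] with w hwr₀ hwt k
  refine hr₁S (mem_ball_iff_norm.2 ?_)
  calc ‖F^[k] w - z₀‖ ≤ 2 * B / r₀ * ‖w - z₀‖ :=
        norm_iterate_sub_fixedPoint_le hF hm hB hfix hr₀Ω hwr₀ k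
    _ ≤ 2 * B / r₀ * t := by gcongr; exact (mem_ball_iff_norm.1 hwt).le
    _ < r₁ := htr

theorem norm_det_fderiv_iterate_le_pow (hΩ : IsOpen Ω) (hF : DifferentiableOn ℂ F Ω)
    (hm : MapsTo F Ω Ω) {θ : ℝ} {w : E} (hw : w ∈ Ω)
    (hθ : ∀ k, ‖(fderiv ℂ F (F^[k] w)).det‖ ≤ θ) (k : ℕ) :
    ‖(fderiv ℂ F^[k] w).det‖ ≤ θ ^ k := by
  induction k with
  | zero => simp [ContinuousLinearMap.det]
  | succ k ih =>
    have hθ₀ : 0 ≤ θ := (norm_nonneg _).trans (hθ 0)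
    have hdet : (fderiv ℂ F^[k + 1] w).det =
        (fderiv ℂ F (F^[k] w)).det * (fderiv ℂ F^[k] w).det := by
      rw [fderiv_iterate_succ hΩ hF hm hw]
      exact LinearMap.det_comp _ _
    rw [hdet, norm_mul, pow_succ']
    gcongr
    exact hθ k

variable [FiniteDimensional ℂ E]

theorem exists_mem_nhds_expDecayOn_det_fderiv_iterate (hΩ : IsOpen Ω)
    (hF : DifferentiableOn ℂ F Ω) (hm : MapsTo F Ω Ω) (hB : ∀ z ∈ Ω, ‖z‖ ≤ B) (hz₀ : z₀ ∈ Ω)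
    (hfix : F z₀ = z₀) (hdet : ‖(fderiv ℂ F z₀).det‖ < 1) :
    ∃ t ∈ 𝓝 z₀, ExpDecayOn (fun k w => (fderiv ℂ F^[k] w).det) t := by
  obtain ⟨θ, hdetθ, hθ₁⟩ := exists_between hdet
  have hθ₀ : 0 < θ := (norm_nonneg _).trans_lt hdetθ
  have hcont : ContinuousAt (fun w => ‖(fderiv ℂ F w).det‖) z₀ :=
    ((differentiableOn_det_fderiv hΩ hF).continuousOn.continuousAt (hΩ.mem_nhds hz₀)).norm
  refine ⟨_, (hΩ.eventually_mem hz₀).and (eventually_forall_iterate_mem hΩ hF hm hB hz₀ hfix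
    (hcont.eventually_lt_const hdetθ)), 1, one_pos, -Real.log θ,
    neg_pos.2 (Real.log_neg hθ₀ hθ₁), fun k w hw => ?_⟩
  refine (norm_det_fderiv_iterate_le_pow hΩ hF hm hw.1 (fun j => (hw.2 j).le) k).trans_eq ?_
  rw [one_mul, neg_neg, mul_comm, Real.exp_nat_mul, Real.exp_log hθ₀]

theorem exists_ball_norm_det_fderiv_iterate_le (hΩ : IsOpen Ω)
    (hF : DifferentiableOn ℂ F Ω) (hm : MapsTo F Ω Ω) (hB : ∀ z ∈ Ω, ‖z‖ ≤ B) {x : E}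
    (hx : x ∈ Ω) :
    ∃ r > 0, ∃ M : ℝ, ∀ k, ∀ w ∈ ball x r, ‖(fderiv ℂ F^[k] w).det‖ ≤ M := by
  obtain ⟨r, hr, hrΩ⟩ := Metric.isOpen_iff.1 hΩ x hx
  obtain ⟨C, -, hdet⟩ := exists_norm_det_le E (2 * B / (r / 2))
  refine ⟨r / 2, by positivity, C, fun k w hw => hdet _ ?_⟩
  have hsub : ball w (r / 2) ⊆ Ω :=
    (ball_subset_ball' (by linarith [mem_ball.1 hw])).trans hrΩ
  exact norm_fderiv_le_of_norm_le_on_ball (by positivity) ((hF.iterate hm k).mono hsub)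
    fun w hw => hB _ (hm.iterate k (hsub hw))

theorem expDecayOn_det_fderiv_iterate (hΩ : IsOpen Ω) (hconn : IsPreconnected Ω)
    (hF : DifferentiableOn ℂ F Ω) (hm : MapsTo F Ω Ω) (hB : ∀ z ∈ Ω, ‖z‖ ≤ B) (hz₀ : z₀ ∈ Ω)
    (hfix : F z₀ = z₀) (hdet : ‖(fderiv ℂ F z₀).det‖ < 1) (hS : IsCompact S) (hSΩ : S ⊆ Ω) :
    ExpDecayOn (fun k w => (fderiv ℂ F^[k] w).det) S :=
  .of_isCompact hΩ hconn (fun k => differentiableOn_det_fderiv hΩ (hF.iterate hm k))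
    (fun _ hx => exists_ball_norm_det_fderiv_iterate_le hΩ hF hm hB hx) hz₀
    (exists_mem_nhds_expDecayOn_det_fderiv_iterate hΩ hF hm hB hz₀ hfix hdet) hS hSΩ

end FixedPoint

theorem norm_le_two_pow_mul_exp_on_halfDisc {J : ℂ → ℂ} {A t : ℝ} {m : ℕ} (hA : 0 ≤ A)
    (ht : 0 ≤ t) (hd : ∀ Y : ℂ, 0 < Y.re → ‖Y‖ ≤ 1 → DifferentiableAt ℂ J Y)
    (hJ : ∀ Y : ℂ, 0 < Y.re → ‖Y‖ ≤ 1 → ‖J Y‖ ≤ A * (‖Y‖ / Y.re) ^ m)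
    (harc : ∀ Y : ℂ, 0 < Y.re → ‖Y‖ = 1 → ‖J Y‖ ≤ A * Real.exp (-t)) {τ : ℝ} (hτ : 0 < τ)
    (hτ₁ : τ ≤ 1) : ‖J τ‖ ≤ A * 2 ^ m * Real.exp (-(t * (τ / 2))) := by
  have hσ : 0 < τ / 2 := half_pos hτ
  set h : ℂ → ℂ := fun Y => J Y * (((τ / 2 : ℝ) / Y) ^ m * Complex.exp (t * (Y - (τ / 2 : ℝ))))
  have hnorm : ∀ Y, ‖h Y‖ = ‖J Y‖ * ((τ / 2 / ‖Y‖) ^ m * Real.exp (t * (Y.re - τ / 2))) := by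
    intro Y
    simp only [h, norm_mul, norm_pow, norm_div, Complex.norm_real, Real.norm_of_nonneg hσ.le,
      Complex.norm_exp, Complex.re_ofReal_mul, Complex.sub_re, Complex.ofReal_re]
  have hle : ‖h τ‖ ≤ A := by
    refine norm_le_on_halfDisc (a := τ / 2) (R := 1) ?_ ?_ ?_
      (by rw [Complex.ofReal_re]; linarith)
      (by rwa [Complex.norm_real, Real.norm_of_nonneg hτ.le])
    · intro Y hY hY₁
      have hY₀ : Y ≠ 0 := by rintro rfl; exact (hσ.trans_le hY).ne rfl
      exact (hd Y (hσ.trans_le hY) hY₁).mul (by fun_prop (disch := assumption))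
    · intro Y hY hY₁
      have hYpos : 0 < ‖Y‖ := (hY ▸ hσ).trans_le (Complex.re_le_norm Y)
      rw [hnorm, hY, sub_self, mul_zero, Real.exp_zero, mul_one]
      calc ‖J Y‖ * (τ / 2 / ‖Y‖) ^ m ≤ A * (‖Y‖ / (τ / 2)) ^ m * (τ / 2 / ‖Y‖) ^ m := by
            gcongr; exact hY ▸ hJ Y (hY ▸ hσ) hY₁
        _ = A := by rw [mul_assoc, ← mul_pow]; field_simp; simp
    · intro Y hY hY₁
      rw [hnorm, hY₁, div_one]
      calc ‖J Y‖ * ((τ / 2) ^ m * Real.exp (t * (Y.re - τ / 2)))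
          ≤ A * Real.exp (-t) * (1 * Real.exp (t * (1 - 0))) := by
            gcongr
            exacts [harc Y (hσ.trans_le hY) hY₁, pow_le_one₀ hσ.le (by linarith),
              hY₁ ▸ Complex.re_le_norm Y]
        _ = A := by rw [one_mul, mul_assoc, ← Real.exp_add]; simp
  rw [hnorm, Complex.norm_real, Real.norm_of_nonneg hτ.le, Complex.ofReal_re,
    show τ / 2 / τ = 2⁻¹ by field_simp, sub_half, inv_pow, ← div_eq_inv_mul, mul_div_assoc',
    div_le_iff₀ (by positivity)] at hle
  rwa [Real.exp_neg, ← div_eq_mul_inv, le_div_iff₀ (Real.exp_pos _)]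


section NormalDisc

theorem norm_inv_div_re_inv (X : ℂ) : ‖X⁻¹‖ / (X⁻¹).re = ‖X‖ / X.re := by
  rcases eq_or_ne X 0 with rfl | hX
  · simp
  · have := norm_pos_iff.2 hX
    rw [norm_inv, Complex.inv_re, Complex.normSq_eq_norm_sq]
    field_simp

variable {C : ℝ} {Y : ℂ}

theorem le_re_inv_add (hY : 0 ≤ Y.re) : C ≤ (Y⁻¹ + C).re := by
  rw [Complex.add_re, Complex.inv_re, Complex.ofReal_re]
  linarith [div_nonneg hY (Complex.normSq_nonneg Y)]

theorem norm_div_re_inv_add_le (hC : 0 ≤ C) (hY : 0 < Y.re) (hY₁ : ‖Y‖ ≤ 1) :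
    ‖Y⁻¹ + C‖ / (Y⁻¹ + C).re ≤ (1 + C) * (‖Y‖ / Y.re) := by
  have hYpos : 0 < ‖Y‖ := hY.trans_le (Complex.re_le_norm Y)
  have hnum : ‖Y⁻¹ + C‖ ≤ (1 + C) / ‖Y‖ := by
    refine (norm_add_le _ _).trans ?_
    rw [norm_inv, Complex.norm_real, Real.norm_of_nonneg hC, add_div, one_div]
    gcongr
    exact le_div_self hC hYpos hY₁
  have hden : Y.re / ‖Y‖ ^ 2 ≤ (Y⁻¹ + C).re := by
    simpa [Complex.inv_re, Complex.normSq_eq_norm_sq] using hC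
  calc ‖Y⁻¹ + C‖ / (Y⁻¹ + C).re ≤ (1 + C) / ‖Y‖ / (Y.re / ‖Y‖ ^ 2) := by gcongr
    _ = (1 + C) * (‖Y‖ / Y.re) := by field_simp

variable {E : Type*} [NormedAddCommGroup E] [NormedSpace ℂ E] {Ω : Set E} {ℓ : E →L[ℂ] ℂ}
  {c K ε : ℝ} {e z₀ : E} {F : E → E}

/-- The parametrisation of the horodisc `{X⁻¹ • e | C ≤ re X}` by the right half plane that sends
`0` to the origin: `X = Y⁻¹ + C`. Only `Y ≠ 0` is meaningful, as `0⁻¹ = 0`. -/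
def normalDisc (e : E) (C : ℝ) (Y : ℂ) : E :=
  (Y⁻¹ + C)⁻¹ • e

theorem normalDisc_ofReal (e : E) (C τ : ℝ) :
    normalDisc e C (τ : ℂ) = (((τ⁻¹ + C)⁻¹ : ℝ) : ℂ) • e := by
  push_cast
  rfl

theorem differentiableAt_normalDisc (e : E) (hC : 0 < C) (hY : 0 ≤ Y.re) (hY₀ : Y ≠ 0) :
    DifferentiableAt ℂ (normalDisc e C) Y := by
  have hX : Y⁻¹ + (C : ℂ) ≠ 0 := fun h => (hC.trans_le (le_re_inv_add hY)).ne' (by simp [h])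
  exact (((differentiableAt_inv hY₀).add_const _).inv hX).smul_const e

theorem isCompact_image_normalDisc (e : E) (hC : 0 < C) :
    IsCompact (normalDisc e C '' ({Y | 0 ≤ Y.re} ∩ sphere 0 1)) := by
  refine ((isCompact_sphere 0 1).inter_left
    (isClosed_le continuous_const Complex.continuous_re)).image_of_continuousOn fun Y hY => ?_
  exact (differentiableAt_normalDisc e hC hY.1
    (ne_of_mem_sphere hY.2 one_ne_zero)).continuousAt.continuousWithinAt

namespace IsModelDomain

theorem normalDisc_mem (hD : IsModelDomain Ω ℓ c K ε) (he : ℓ e = 1) (hC : K * ‖e‖ ^ 2 < C)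
    (hY : 0 ≤ Y.re) : normalDisc e C Y ∈ Ω :=
  hD.inv_smul_mem he (hC.trans_le (le_re_inv_add hY))

variable [FiniteDimensional ℂ E]

theorem exists_norm_det_fderiv_normalDisc_le (hD : IsModelDomain Ω ℓ c K ε) (he : ℓ e = 1) :
    ∃ C, K * ‖e‖ ^ 2 < C ∧ ∃ A > 0, ∀ f, IsTangentSelfMap Ω f → ∀ Y : ℂ, 0 < Y.re → ‖Y‖ ≤ 1 →
      ‖(fderiv ℂ f (normalDisc e C Y)).det‖ ≤ A * (‖Y‖ / Y.re) ^ (2 * Module.finrank ℂ E) := by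
  obtain ⟨κ, hκ, A, hA, hdet⟩ := hD.exists_norm_det_fderiv_le he
  have he₀ : 0 < ‖e‖ := norm_pos_iff.2 fun h => by simp [h] at he
  have hκ₀ : 0 < κ := hD.K_pos.trans hκ
  obtain ⟨C, hCe⟩ : ∃ C, κ * ‖e‖ ^ 2 = C := ⟨_, rfl⟩
  have hC : 0 < C := hCe ▸ by positivity
  refine ⟨C, hCe ▸ by gcongr, A * (1 + C) ^ (2 * Module.finrank ℂ E), by positivity,
    fun f hf Y hY hY₁ => ?_⟩
  have hXre : C ≤ (Y⁻¹ + C).re := le_re_inv_add hY.le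
  have hX : 0 < ‖Y⁻¹ + C‖ := (hC.trans_le hXre).trans_le (Complex.re_le_norm _)
  have hℓ : ℓ (normalDisc e C Y) = (Y⁻¹ + C)⁻¹ := by simp [normalDisc, he]
  have hre : (ℓ (normalDisc e C Y)).re = (Y⁻¹ + C).re / ‖Y⁻¹ + C‖ ^ 2 := by
    rw [hℓ, Complex.inv_re, Complex.normSq_eq_norm_sq]
  have hcone : κ * ‖normalDisc e C Y‖ ^ 2 ≤ (ℓ (normalDisc e C Y)).re := by
    rw [hre, normalDisc, norm_smul, norm_inv, mul_pow, inv_pow, inv_mul_eq_div,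
      ← mul_div_assoc, hCe]
    gcongr
  calc ‖(fderiv ℂ f (normalDisc e C Y)).det‖
      ≤ A * ((‖ℓ (normalDisc e C Y)‖ / (ℓ (normalDisc e C Y)).re) ^ 2) ^ Module.finrank ℂ E :=
        hdet f hf _ (hre ▸ div_pos (hC.trans_le hXre) (by positivity)) hcone
    _ ≤ A * (((1 + C) * (‖Y‖ / Y.re)) ^ 2) ^ Module.finrank ℂ E := by
      rw [hℓ, norm_inv_div_re_inv]
      gcongr
      · exact div_nonneg hX.le (hC.le.trans hXre)
      · exact norm_div_re_inv_add_le hC.le hY hY₁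
    _ = _ := by rw [← pow_mul, mul_pow, mul_assoc]

theorem exists_norm_det_fderiv_iterate_normalDisc_le (hD : IsModelDomain Ω ℓ c K ε) (he : ℓ e = 1)
    (hF : IsTangentSelfMap Ω F) (hz₀ : z₀ ∈ Ω) (hfix : F z₀ = z₀)
    (hdet : ‖(fderiv ℂ F z₀).det‖ < 1) :
    ∃ C > 0, ∃ A > 0, ∃ γ > 0, ∀ (k : ℕ) (τ : ℝ), 0 < τ → τ ≤ 1 →
      ‖(fderiv ℂ F^[k] (normalDisc e C τ)).det‖ ≤ A * Real.exp (-(γ * (k * τ))) := by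
  obtain ⟨C, hKC, A, hA, hdisc⟩ := hD.exists_norm_det_fderiv_normalDisc_le he
  obtain ⟨B, -, hB⟩ := hD.exists_norm_le
  have hK := hD.K_pos
  have hC : 0 < C := lt_of_le_of_lt (by positivity) hKC
  have hmem : ∀ {Y : ℂ}, 0 ≤ Y.re → normalDisc e C Y ∈ Ω := hD.normalDisc_mem he hKC
  obtain ⟨A', -, γ, hγ, hdecay⟩ := expDecayOn_det_fderiv_iterate hD.isOpen hD.isPreconnected
    hF.differentiableOn hF.mapsTo hB hz₀ hfix hdet (isCompact_image_normalDisc e hC)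
    (image_subset_iff.2 fun Y hY => hmem hY.1)
  refine ⟨C, hC, max A A' * 2 ^ (2 * Module.finrank ℂ E), by positivity, γ / 2, half_pos hγ,
    fun k τ hτ hτ₁ => ?_⟩
  rw [show γ / 2 * (k * τ) = γ * k * (τ / 2) by ring]
  refine norm_le_two_pow_mul_exp_on_halfDisc
    (J := fun Y => (fderiv ℂ F^[k] (normalDisc e C Y)).det) (by positivity) (by positivity)
    (fun Y hY _ => ?_) (fun Y hY hY₁ => ?_) (fun Y hY hY₁ => ?_) hτ hτ₁
  · have hdisc := differentiableAt_normalDisc e hC hY.le (by rintro rfl; exact hY.ne rfl)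
    exact ((differentiableOn_det_fderiv hD.isOpen (hF.iterate k).differentiableOn).differentiableAt
      (hD.isOpen.mem_nhds (hmem hY.le))).comp Y hdisc
  · refine (hdisc _ (hF.iterate k) Y hY hY₁).trans ?_
    gcongr
    exact le_max_left _ _
  · refine (hdecay k _ (mem_image_of_mem _ ⟨hY.le, by simpa using hY₁⟩)).trans ?_
    rw [neg_mul]
    gcongr
    exact le_max_right _ _

theorem one_le_norm_det_fderiv (hD : IsModelDomain Ω ℓ c K ε) (he : ℓ e = 1)
    (hF : IsTangentSelfMap Ω F) (hz₀ : z₀ ∈ Ω) (hfix : F z₀ = z₀) :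
    1 ≤ ‖(fderiv ℂ F z₀).det‖ := by
  by_contra! hdet
  obtain ⟨C, hC, A, hA, γ, hγ, hdecay⟩ :=
    hD.exists_norm_det_fderiv_iterate_normalDisc_le he hF hz₀ hfix hdet
  have hexp : Tendsto (fun M => A * Real.exp (-(γ * M))) atTop (𝓝 0) := by
    simpa using (Real.tendsto_exp_neg_atTop_nhds_zero.comp
      (tendsto_id.const_mul_atTop hγ)).const_mul A
  obtain ⟨M, hM, hM₀⟩ :=
    ((hexp.eventually_lt_const (one_half_pos (α := ℝ))).and (eventually_ge_atTop 0)).exists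
  have hs : Tendsto (fun τ : ℝ => (τ⁻¹ + C)⁻¹) (𝓝[>] 0) (𝓝[>] 0) :=
    tendsto_inv_atTop_nhdsGT_zero.comp
      (tendsto_atTop_add_const_right _ _ tendsto_inv_nhdsGT_zero)
  obtain ⟨τ, hhalf, hτ₀, hτ₁⟩ := ((hs.eventually
    (hD.eventually_half_le_norm_det_fderiv_iterate he hF (M + 1))).and
      (Ioc_mem_nhdsGT one_pos)).exists
  -- After about `M / τ` iterations both bounds for the Jacobian apply at the same point.
  set k := ⌈M / τ⌉₊
  have hMk : M ≤ k * τ := (div_le_iff₀ hτ₀).1 (Nat.le_ceil _)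
  have hkM : k * τ ≤ M + 1 := by
    have := mul_le_mul_of_nonneg_right (Nat.ceil_lt_add_one (div_nonneg hM₀ hτ₀.le)).le hτ₀.le
    rw [add_mul, div_mul_cancel₀ _ hτ₀.ne'] at this
    linarith
  have hsτ : (τ⁻¹ + C)⁻¹ ≤ τ := inv_le_of_inv_le₀ hτ₀ (by linarith)
  have hlower := hhalf k ((mul_le_mul_of_nonneg_left hsτ k.cast_nonneg).trans hkM)
  have hupper := hdecay k τ hτ₀ hτ₁
  rw [normalDisc_ofReal] at hupper
  have hmono : A * Real.exp (-(γ * (k * τ))) ≤ A * Real.exp (-(γ * M)) := by gcongr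
  linarith

end IsModelDomain

end NormalDisc

/-! ### Functions semiconjugating a tangent self map to a rotation -/

section Semiconj

variable {E G : Type*} [NormedAddCommGroup E] [NormedSpace ℂ E] [NormedAddCommGroup G]
  [NormedSpace ℂ G] {F : E → E} {f : E → G} {l : ℂ} {x : E} {d η B : ℝ}

theorem norm_le_mul_of_semiconj (hl : l ≠ 1) (hηd : η < d) (hη : ‖F x - x‖ ≤ η)
    (hf : DifferentiableOn ℂ f (ball x d)) (hB : ∀ y ∈ ball x d, ‖f y‖ ≤ B)
    (hfF : f (F x) = l • f x) : ‖f x‖ ≤ B * (2 * η / (d * ‖l - 1‖)) := by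
  have hl₁ : 0 < ‖l - 1‖ := norm_pos_iff.2 (sub_ne_zero.2 hl)
  have hd : 0 < d := ((norm_nonneg _).trans hη).trans_lt hηd
  have hB₀ : 0 ≤ B := (norm_nonneg _).trans (hB x (mem_ball_self hd))
  have hdiff : ‖l - 1‖ * ‖f x‖ ≤ 2 * B / d * η := by
    calc ‖l - 1‖ * ‖f x‖ = ‖f (F x) - f x‖ := by rw [hfF, ← norm_smul, sub_smul, one_smul]
      _ ≤ 2 * B / d * ‖F x - x‖ :=
        norm_sub_le_of_norm_le_on_ball hf hB (mem_ball_iff_norm.2 (hη.trans_lt hηd))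
      _ ≤ 2 * B / d * η := by gcongr
  rw [← le_div_iff₀' hl₁] at hdiff
  exact hdiff.trans_eq (by field_simp)

-- Each of the `N` applications of `norm_le_mul_of_semiconj` costs a collar of width `d`.
theorem norm_le_mul_pow_of_semiconj (hl : l ≠ 1) (hηd : η < d) {N : ℕ}
    (hη : ∀ y ∈ ball x ((N + 1) * d), ‖F y - y‖ ≤ η)
    (hf : DifferentiableOn ℂ f (ball x ((N + 1) * d)))
    (hB : ∀ y ∈ ball x ((N + 1) * d), ‖f y‖ ≤ B)
    (hfF : ∀ y ∈ ball x ((N + 1) * d), f (F y) = l • f y) (hd : 0 < d) :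
    ‖f x‖ ≤ B * (2 * η / (d * ‖l - 1‖)) ^ N := by
  induction N generalizing x with
  | zero => simpa using hB x (mem_ball_self (by simpa using hd))
  | succ N ih =>
    have hx : x ∈ ball x ((↑(N + 1) + 1) * d) := mem_ball_self (by positivity)
    have hcollar : ∀ y ∈ ball x d, ball y ((N + 1) * d) ⊆ ball x ((↑(N + 1) + 1) * d) :=
      fun y hy => ball_subset_ball' (by push_cast; linarith [mem_ball.1 hy])
    have hsub : ball x d ⊆ ball x ((↑(N + 1) + 1) * d) := ball_subset_ball <|
      le_mul_of_one_le_left hd.le (le_add_of_nonneg_left (Nat.cast_nonneg _))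
    rw [pow_succ, ← mul_assoc]
    exact norm_le_mul_of_semiconj hl hηd (hη x hx) (hf.mono hsub)
      (fun y hy => ih (fun w hw => hη w (hcollar y hy hw)) (hf.mono (hcollar y hy))
        (fun w hw => hB w (hcollar y hy hw)) fun w hw => hfF w (hcollar y hy hw)) (hfF x hx)

theorem eqOn_zero_rightHalfPlane_of_forall_le_exp {g : ℂ → G}
    (hd : ∀ Y : ℂ, 0 ≤ Y.re → DifferentiableAt ℂ g Y) (hB : ∀ Y : ℂ, 0 ≤ Y.re → ‖g Y‖ ≤ B)
    (hdecay : ∀ M > 0, ∀ᶠ t : ℝ in atTop, ‖g t‖ ≤ B * Real.exp (-(M * t))) :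
    EqOn g 0 {Y : ℂ | 0 ≤ Y.re} := by
  refine PhragmenLindelof.eq_zero_on_right_half_plane_of_superexponential_decay
    (DifferentiableOn.diffContOnCl ?_) ⟨1, one_lt_two, 0, Asymptotics.IsBigO.of_bound B ?_⟩
    (fun n => ?_) ⟨B, fun t => hB _ (by simp)⟩
  · rw [Complex.closure_setOfPred_lt_re]
    exact fun Y hY => (hd Y hY).differentiableWithinAt
  · filter_upwards [mem_inf_of_right (mem_principal_self _)] with Y hY
    simpa using hB Y (le_of_lt hY)
  · have hlim : Tendsto (fun t : ℝ => B * Real.exp (-t)) atTop (𝓝 0) := by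
      simpa using Real.tendsto_exp_neg_atTop_nhds_zero.const_mul B
    refine squeeze_zero' (Eventually.of_forall fun t => by positivity) ?_ hlim
    filter_upwards [hdecay (n + 1) (by positivity)] with t ht
    calc Real.exp t ^ n * ‖g t‖ ≤ Real.exp t ^ n * (B * Real.exp (-((n + 1) * t))) := by gcongr
      _ = B * Real.exp (n * t + -((n + 1) * t)) := by rw [Real.exp_add, Real.exp_nat_mul]; ring
      _ = B * Real.exp (-t) := by ring_nf

namespace IsModelDomain

variable {Ω : Set E} {ℓ : E →L[ℂ] ℂ} {c K ε : ℝ} {e u : E}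

theorem eventually_norm_le_exp_of_semiconj (hD : IsModelDomain Ω ℓ c K ε) (hu : ℓ u = 1)
    (hF : IsTangentSelfMap Ω F) (hl : l ≠ 1) (hf : DifferentiableOn ℂ f Ω)
    (hB : ∀ z ∈ Ω, ‖f z‖ ≤ B) (hfF : ∀ z ∈ Ω, f (F z) = l • f z) {M : ℝ} (hM : 0 < M) :
    ∀ᶠ s : ℝ in 𝓝[>] 0, ‖f ((s : ℂ) • u)‖ ≤ B * Real.exp (-(M / s)) := by
  obtain ⟨a, ha, hray⟩ := hD.exists_ball_along_ray hu hF
  have hl₁ : 0 < ‖l - 1‖ := norm_pos_iff.2 (sub_ne_zero.2 hl)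
  obtain ⟨δ, hδ, hδM⟩ := exists_pos_mul_lt
    (show 0 < min a (a * ‖l - 1‖ * Real.exp (-1) / 2) by positivity) (M + 2)
  rw [lt_min_iff] at hδM
  filter_upwards [hray δ hδ, Ioc_mem_nhdsGT one_pos] with s ⟨hs, hsub, hclose⟩ ⟨_, hs₁⟩
  set N := ⌈M / s⌉₊
  set d : ℝ := a * s ^ 2 / (M + 2)
  have hd : 0 < d := by positivity
  have hNs : (N + 1) * s ≤ M + 2 := by
    calc (N + 1) * s ≤ (M / s + 1 + 1) * s := by
          gcongr; exact (Nat.ceil_lt_add_one (by positivity)).le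
      _ = M + 2 * s := by field_simp; ring
      _ ≤ M + 2 := by linarith
  have hNd : (N + 1) * d ≤ a * s := by
    calc (N + 1) * d = (N + 1) * s * (a * s) / (M + 2) := by ring
      _ ≤ (M + 2) * (a * s) / (M + 2) := by gcongr
      _ = a * s := by field_simp
  have hδd : δ * s ^ 2 < d := by
    rw [lt_div_iff₀ (by positivity)]
    nlinarith [pow_pos hs 2]
  have hratio : 2 * (δ * s ^ 2) / (d * ‖l - 1‖) ≤ Real.exp (-1) := by
    rw [show 2 * (δ * s ^ 2) / (d * ‖l - 1‖) = 2 * ((M + 2) * δ) / (a * ‖l - 1‖) by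
      simp only [d]; field_simp, div_le_iff₀ (by positivity)]
    linarith
  have hballs : ball ((s : ℂ) • u) ((N + 1) * d) ⊆ ball ((s : ℂ) • u) (a * s) :=
    ball_subset_ball hNd
  have hB₀ : 0 ≤ B := (norm_nonneg _).trans (hB _ (hsub (mem_ball_self (by positivity))))
  calc ‖f ((s : ℂ) • u)‖ ≤ B * (2 * (δ * s ^ 2) / (d * ‖l - 1‖)) ^ N :=
        norm_le_mul_pow_of_semiconj hl hδd (fun y hy => hclose y (hballs hy))
          (hf.mono (hballs.trans hsub)) (fun y hy => hB y (hsub (hballs hy)))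
          (fun y hy => hfF y (hsub (hballs hy))) hd
    _ ≤ B * Real.exp (-1) ^ N := by gcongr
    _ = B * Real.exp (-N) := by rw [← Real.exp_nat_mul, mul_neg_one]
    _ ≤ B * Real.exp (-(M / s)) := by gcongr; exact Nat.le_ceil _

theorem apply_inv_smul_eq_zero_of_semiconj (hD : IsModelDomain Ω ℓ c K ε) (hu : ℓ u = 1)
    (hF : IsTangentSelfMap Ω F) (hl : l ≠ 1) (hf : DifferentiableOn ℂ f Ω)
    (hB : ∀ z ∈ Ω, ‖f z‖ ≤ B) (hfF : ∀ z ∈ Ω, f (F z) = l • f z) {X : ℂ}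
    (hX : K * ‖u‖ ^ 2 < X.re) : f (X⁻¹ • u) = 0 := by
  obtain ⟨A, hKA, hAX⟩ := exists_between hX
  have hA : 0 < A := lt_of_le_of_lt (mul_nonneg hD.K_pos.le (sq_nonneg _)) hKA
  have hre : ∀ {Y : ℂ}, 0 ≤ Y.re → K * ‖u‖ ^ 2 < (Y + A).re := fun hY => by
    rw [Complex.add_re, Complex.ofReal_re]; linarith
  have hmem : ∀ {Y : ℂ}, 0 ≤ Y.re → (Y + A)⁻¹ • u ∈ Ω := fun hY => hD.inv_smul_mem hu (hre hY)
  have hzero := eqOn_zero_rightHalfPlane_of_forall_le_exp (g := fun Y => f ((Y + A)⁻¹ • u))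
    (fun Y hY => ?_) (fun Y hY => hB _ (hmem hY)) (fun M hM => ?_)
    (show X - A ∈ {Y : ℂ | 0 ≤ Y.re} by simpa using hAX.le)
  · simpa using hzero
  · have := hD.ne_zero_of_lt_re (hre hY)
    exact (hf.differentiableAt (hD.isOpen.mem_nhds (hmem hY))).comp Y
      (by fun_prop (disch := assumption))
  · have hlim : Tendsto (fun t : ℝ => (t + A)⁻¹) atTop (𝓝[>] 0) :=
      tendsto_inv_atTop_nhdsGT_zero.comp (tendsto_atTop_add_const_right _ _ tendsto_id)
    filter_upwards [hlim.eventually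
      (hD.eventually_norm_le_exp_of_semiconj hu hF hl hf hB hfF hM)] with t ht
    have hB₀ : 0 ≤ B := (norm_nonneg _).trans (hB _ (hmem (Y := 0) le_rfl))
    push_cast at ht
    refine ht.trans ?_
    rw [div_inv_eq_mul]
    gcongr
    linarith

theorem eqOn_zero_of_semiconj (hD : IsModelDomain Ω ℓ c K ε) (he : ℓ e = 1)
    (hF : IsTangentSelfMap Ω F) (hl : l ≠ 1) (hf : DifferentiableOn ℂ f Ω)
    (hB : ∀ z ∈ Ω, ‖f z‖ ≤ B) (hfF : ∀ z ∈ Ω, f (F z) = l • f z) : EqOn f 0 Ω := by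
  obtain ⟨A, hKA⟩ := exists_gt (K * ‖e‖ ^ 2)
  have hA : (A : ℂ) ≠ 0 := hD.ne_zero_of_lt_re hKA
  set x : E := (A : ℂ)⁻¹ • e
  have hx : x ∈ Ω := hD.inv_smul_mem he hKA
  have hℓx : (ℓ x)⁻¹ = A := by simp [x, he]
  have hℓx₀ : ℓ x ≠ 0 := inv_eq_zero.not.1 (hℓx ▸ hA)
  refine eqOn_zero_of_eventuallyEq_zero hD.isOpen hD.isPreconnected hf hx ?_
  have hinv : ContinuousAt (fun w => (ℓ w)⁻¹) x := ℓ.continuous.continuousAt.inv₀ hℓx₀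
  have hcone : ∀ᶠ w in 𝓝 x, K * ‖(ℓ w)⁻¹ • w‖ ^ 2 < (ℓ w)⁻¹.re := by
    refine ContinuousAt.eventually_lt (by fun_prop)
      (Complex.continuous_re.continuousAt.comp hinv) ?_
    rwa [hℓx, smul_inv_smul₀ hA]
  filter_upwards [hcone, ℓ.continuous.continuousAt.eventually_ne hℓx₀] with w hw hw₀
  have hzero := hD.apply_inv_smul_eq_zero_of_semiconj
    (by rw [map_smul, smul_eq_mul, inv_mul_cancel₀ hw₀]) hF hl hf hB hfF hw
  rwa [inv_inv, smul_inv_smul₀ hw₀] at hzero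

end IsModelDomain

end Semiconj

/-! ### Unimodular eigenvalues at the fixed point -/

section TwistedAverage

variable {E : Type*} [NormedAddCommGroup E] [NormedSpace ℂ E] {F : E → E} {Ω : Set E} {l : ℂ}
  {B : ℝ} {z z₀ v : E}

theorem pow_apply_eigenvector {A : E →L[ℂ] E} (hv : A v = l • v) (k : ℕ) :
    (A ^ k) v = l ^ k • v := by
  induction k with
  | zero => simp
  | succ k ih => rw [pow_succ, mul_apply_eq_comp, hv, map_smul, ih, smul_smul, pow_succ']

/-- The ergodic averages `(N + 1)⁻¹ ∑_{j ≤ N} l⁻ʲ F^[j]`. For `‖l‖ = 1` their limits semiconjugate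
`F` to the rotation `l`, while on an eigenvector with eigenvalue `l` their derivative at the fixed
point is the identity. -/
def twistedAverage (F : E → E) (l : ℂ) (N : ℕ) (z : E) : E :=
  ((N : ℂ) + 1)⁻¹ • ∑ j ∈ Finset.range (N + 1), l⁻¹ ^ j • F^[j] z

theorem norm_twistedAverage_le (hm : MapsTo F Ω Ω) (hB : ∀ z ∈ Ω, ‖z‖ ≤ B) (hl : ‖l‖ = 1)
    (N : ℕ) (hz : z ∈ Ω) : ‖twistedAverage F l N z‖ ≤ B := by
  rw [twistedAverage, norm_smul, norm_inv, ← Nat.cast_succ, Complex.norm_natCast,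
    inv_mul_le_iff₀ (by positivity)]
  refine (norm_sum_le_of_le _ (n := fun _ => B) fun j _ => ?_).trans (by simp)
  rw [norm_smul, norm_pow, norm_inv, hl, inv_one, one_pow, one_mul]
  exact hB _ (hm.iterate j hz)

theorem differentiableOn_twistedAverage (hF : DifferentiableOn ℂ F Ω) (hm : MapsTo F Ω Ω) (N : ℕ) :
    DifferentiableOn ℂ (twistedAverage F l N) Ω :=
  (DifferentiableOn.fun_sum fun j _ => (hF.iterate hm j).const_smul _).const_smul _

theorem twistedAverage_map (hl : l ≠ 0) (N : ℕ) (z : E) :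
    twistedAverage F l N (F z) = l • twistedAverage F l N z +
      (l * ((N : ℂ) + 1)⁻¹) • (l⁻¹ ^ (N + 1) • F^[N + 1] z - z) := by
  have hshift : ∑ j ∈ Finset.range (N + 1), l⁻¹ ^ j • F^[j] (F z) =
      l • ∑ j ∈ Finset.range (N + 1), l⁻¹ ^ (j + 1) • F^[j + 1] z := by
    rw [Finset.smul_sum]
    refine Finset.sum_congr rfl fun j _ => ?_
    rw [smul_smul, pow_succ', mul_inv_cancel_left₀ hl, iterate_succ_apply]
  have htelescope : ∑ j ∈ Finset.range (N + 1), l⁻¹ ^ (j + 1) • F^[j + 1] z =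
      ∑ j ∈ Finset.range (N + 1), l⁻¹ ^ j • F^[j] z + (l⁻¹ ^ (N + 1) • F^[N + 1] z - z) := by
    have hsum := (Finset.sum_range_succ' (fun j => l⁻¹ ^ j • F^[j] z) (N + 1)).symm.trans
      (Finset.sum_range_succ (fun j => l⁻¹ ^ j • F^[j] z) (N + 1))
    simpa [add_sub_assoc'] using eq_sub_of_add_eq hsum
  rw [twistedAverage, twistedAverage, hshift, htelescope]
  module

theorem tendsto_twistedAverage_map_sub (hm : MapsTo F Ω Ω) (hB : ∀ z ∈ Ω, ‖z‖ ≤ B) (hl : ‖l‖ = 1)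
    (hz : z ∈ Ω) :
    Tendsto (fun N => twistedAverage F l N (F z) - l • twistedAverage F l N z) atTop (𝓝 0) := by
  have hlim : Tendsto (fun N : ℕ => 1 / ((N : ℝ) + 1) * (2 * B)) atTop (𝓝 0) := by
    simpa using tendsto_one_div_add_atTop_nhds_zero_nat.mul_const (2 * B)
  refine squeeze_zero_norm (fun N => ?_) hlim
  rw [twistedAverage_map (norm_ne_zero_iff.1 (by simp [hl])), add_sub_cancel_left, norm_smul,
    norm_mul, hl, one_mul, norm_inv, ← Nat.cast_succ, Complex.norm_natCast, one_div, Nat.cast_succ,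
    two_mul]
  gcongr
  refine norm_sub_le_of_le ?_ (hB z hz)
  rw [norm_smul, norm_pow, norm_inv, hl, inv_one, one_pow, one_mul]
  exact hB _ (hm.iterate _ hz)

theorem fderiv_twistedAverage_apply_eigenvector (hF : DifferentiableAt ℂ F z₀) (hfix : F z₀ = z₀)
    (hl : l ≠ 0) (hv : fderiv ℂ F z₀ v = l • v) (N : ℕ) :
    fderiv ℂ (twistedAverage F l N) z₀ v = v := by
  have hderiv : HasFDerivAt (twistedAverage F l N) (((N : ℂ) + 1)⁻¹ •
      ∑ j ∈ Finset.range (N + 1), l⁻¹ ^ j • (fderiv ℂ F z₀) ^ j) z₀ :=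
    (HasFDerivAt.fun_sum fun j _ =>
      (hF.hasFDerivAt.iterate hfix j).const_smul _).const_smul _
  have hsummand : ∀ j, l⁻¹ ^ j • ((fderiv ℂ F z₀) ^ j) v = v := fun j => by
    rw [pow_apply_eigenvector hv, smul_smul, ← mul_pow, inv_mul_cancel₀ hl, one_pow, one_smul]
  have hN : (N : ℂ) + 1 ≠ 0 := Nat.cast_add_one_ne_zero N
  simp only [hderiv.fderiv, _root_.smul_apply, _root_.sum_apply, hsummand, Finset.sum_const,
    Finset.card_range, ← Nat.cast_smul_eq_nsmul ℂ, Nat.cast_succ, inv_smul_smul₀ hN]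

variable [FiniteDimensional ℂ E]

-- Montel's theorem, with an ultrafilter in place of a subsequence.
theorem exists_tendsto_fderiv_of_norm_le {ι : Type*} (U : Ultrafilter ι) {Φ : ι → E → E}
    (hΩ : IsOpen Ω) (hd : ∀ i, DifferentiableOn ℂ (Φ i) Ω) (hB : ∀ i, ∀ z ∈ Ω, ‖Φ i z‖ ≤ B) :
    ∃ f : E → E, ∀ z ∈ Ω, Tendsto (fun i => Φ i z) U (𝓝 (f z)) ∧ DifferentiableAt ℂ f z ∧
      Tendsto (fun i => fderiv ℂ (Φ i) z) U (𝓝 (fderiv ℂ f z)) := by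
  have : ProperSpace E := FiniteDimensional.proper ℂ E
  have hlim : ∀ z ∈ Ω, ∃ y, Tendsto (fun i => Φ i z) U (𝓝 y) := fun z hz => by
    have hmem : ∀ i, Φ i z ∈ closedBall 0 B := fun i => by simpa using hB i z hz
    obtain ⟨y, -, hy⟩ := (isCompact_closedBall (0 : E) B).ultrafilter_le_nhds
      (U.map fun i => Φ i z) (le_principal_iff.2 (mem_map.2 (univ_mem' hmem)))
    exact ⟨y, hy⟩
  choose! f hf using hlim
  refine ⟨f, fun z hz => ?_⟩
  obtain ⟨r, hr, hrΩ⟩ := Metric.isOpen_iff.1 hΩ z hz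
  obtain ⟨D, hD, hDlim⟩ := exists_hasFDerivAt_of_tendsto_ultrafilter hr
    (Eventually.of_forall fun i => (hd i).mono hrΩ)
    (Eventually.of_forall fun i w hw => hB i w (hrΩ hw)) fun w hw => hf w (hrΩ hw)
  exact ⟨hf z hz, hD.differentiableAt, hD.fderiv ▸ hDlim⟩

theorem exists_semiconj_fderiv_apply_eq (hΩ : IsOpen Ω) (hF : DifferentiableOn ℂ F Ω)
    (hm : MapsTo F Ω Ω) (hB : ∀ z ∈ Ω, ‖z‖ ≤ B) (hz₀ : z₀ ∈ Ω) (hfix : F z₀ = z₀)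
    (hl : ‖l‖ = 1) :
    ∃ f : E → E, DifferentiableOn ℂ f Ω ∧ (∀ z ∈ Ω, ‖f z‖ ≤ B) ∧
      (∀ z ∈ Ω, f (F z) = l • f z) ∧ ∀ v, fderiv ℂ F z₀ v = l • v → fderiv ℂ f z₀ v = v := by
  have hU : (hyperfilter ℕ : Filter ℕ) ≤ atTop := Nat.hyperfilter_le_atTop
  have hl₀ : l ≠ 0 := norm_ne_zero_iff.1 (by simp [hl])
  obtain ⟨f, hf⟩ := exists_tendsto_fderiv_of_norm_le (hyperfilter ℕ) hΩ
    (differentiableOn_twistedAverage hF hm) fun N z => norm_twistedAverage_le hm hB hl N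
  refine ⟨f, fun z hz => (hf z hz).2.1.differentiableWithinAt, fun z hz => ?_, fun z hz => ?_,
    fun v hv => ?_⟩
  · exact le_of_tendsto (hf z hz).1.norm
      (Eventually.of_forall fun N => norm_twistedAverage_le hm hB hl N hz)
  · exact sub_eq_zero.1 (tendsto_nhds_unique
      ((hf _ (hm hz)).1.sub ((hf z hz).1.const_smul l))
      ((tendsto_twistedAverage_map_sub hm hB hl hz).mono_left hU))
  · refine tendsto_nhds_unique
      (((ContinuousLinearMap.apply ℂ E v).continuous.tendsto _).comp (hf z₀ hz₀).2.2) ?_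
    simp only [comp_def, ContinuousLinearMap.apply_apply, fderiv_twistedAverage_apply_eigenvector
      (hF.differentiableAt (hΩ.mem_nhds hz₀)) hfix hl₀ hv, tendsto_const_nhds]

theorem IsModelDomain.eigenvalue_eq_one_of_norm_eq_one {ℓ : E →L[ℂ] ℂ} {c K ε : ℝ} {e : E}
    (hD : IsModelDomain Ω ℓ c K ε) (he : ℓ e = 1) (hF : IsTangentSelfMap Ω F) (hz₀ : z₀ ∈ Ω)
    (hfix : F z₀ = z₀) (hv : v ≠ 0) (hlv : fderiv ℂ F z₀ v = l • v) (hl : ‖l‖ = 1) : l = 1 := by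
  by_contra hl₁
  obtain ⟨B, -, hB⟩ := hD.exists_norm_le
  obtain ⟨f, hfd, hfB, hfF, hfv⟩ := exists_semiconj_fderiv_apply_eq hD.isOpen hF.differentiableOn
    hF.mapsTo hB hz₀ hfix hl
  have hzero : f =ᶠ[𝓝 z₀] fun _ => 0 :=
    (hD.eqOn_zero_of_semiconj he hF hl₁ hfd hfB hfF).eventuallyEq_of_mem (hD.isOpen.mem_nhds hz₀)
  have hv₀ := hfv v hlv
  rw [hzero.fderiv_eq, fderiv_fun_const] at hv₀
  exact hv hv₀.symm

end TwistedAverage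

/-! ### Rigidity at the fixed point -/

section PowerBounded

theorem norm_multiset_prod_le_one {s : Multiset ℂ} (hs : ∀ x ∈ s, ‖x‖ ≤ 1) : ‖s.prod‖ ≤ 1 := by
  induction s using Multiset.induction_on with
  | empty => simp
  | cons a s ih =>
    rw [Multiset.prod_cons, norm_mul]
    exact mul_le_one₀ (hs a (Multiset.mem_cons_self a s)) (norm_nonneg _)
      (ih fun x hx => hs x (Multiset.mem_cons_of_mem hx))

theorem one_le_norm_of_one_le_norm_multiset_prod {s : Multiset ℂ} (hs : ∀ x ∈ s, ‖x‖ ≤ 1)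
    (hprod : 1 ≤ ‖s.prod‖) {x : ℂ} (hx : x ∈ s) : 1 ≤ ‖x‖ := by
  obtain ⟨t, rfl⟩ := Multiset.exists_cons_of_mem hx
  have ht := norm_multiset_prod_le_one fun y hy => hs y (Multiset.mem_cons_of_mem hy)
  rw [Multiset.prod_cons, norm_mul] at hprod
  exact hprod.trans (mul_le_of_le_one_right (norm_nonneg _) ht)

variable {E : Type*} [NormedAddCommGroup E] [NormedSpace ℂ E] {A : E →L[ℂ] E} {C : ℝ} {l : ℂ}
  {v : E}

theorem norm_le_one_of_norm_pow_le (hpow : ∀ k : ℕ, ‖A ^ k‖ ≤ C) (hv : v ≠ 0)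
    (hlv : A v = l • v) : ‖l‖ ≤ 1 := by
  by_contra! hl
  obtain ⟨k, hk⟩ := pow_unbounded_of_one_lt C hl
  have hgrow := (A ^ k).le_of_opNorm_le (hpow k) v
  rw [pow_apply_eigenvector hlv, norm_smul, norm_pow] at hgrow
  exact hk.not_ge (le_of_mul_le_mul_right hgrow (norm_pos_iff.2 hv))

theorem pow_apply_of_apply_sub_eq (hv : A (A v - v) = A v - v) (k : ℕ) :
    (A ^ k) v = v + (k : ℂ) • (A v - v) := by
  induction k with
  | zero => simp
  | succ k ih =>
    rw [pow_succ', mul_apply_eq_comp, ih, map_add, map_smul, hv]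
    push_cast
    module

theorem apply_eq_self_of_apply_sub_eq (hpow : ∀ k : ℕ, ‖A ^ k‖ ≤ C) (hv : A (A v - v) = A v - v) :
    A v = v := by
  by_contra hne
  obtain ⟨k, hk⟩ := exists_nat_gt ((C * ‖v‖ + ‖v‖) / ‖A v - v‖)
  rw [div_lt_iff₀ (norm_pos_iff.2 (sub_ne_zero.2 hne))] at hk
  refine hk.not_ge ?_
  calc k * ‖A v - v‖ = ‖(A ^ k) v - v‖ := by
        rw [pow_apply_of_apply_sub_eq hv, add_sub_cancel_left, norm_smul, Complex.norm_natCast]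
    _ ≤ C * ‖v‖ + ‖v‖ := norm_sub_le_of_le ((A ^ k).le_of_opNorm_le (hpow k) v) le_rfl

variable [FiniteDimensional ℂ E]

theorem isNilpotent_sub_one_of_forall_eigenvalue_eq_one {T : Module.End ℂ E}
    (h : ∀ l ∈ T.charpoly.roots, l = 1) : IsNilpotent (T - 1) := by
  have hprod := (IsAlgClosed.splits T.charpoly).eq_prod_roots_of_monic T.charpoly_monic
  rw [Multiset.eq_replicate_of_mem h, Multiset.map_replicate, Multiset.prod_replicate] at hprod
  have hcayley := T.aeval_self_charpoly
  rw [hprod] at hcayley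
  exact ⟨T.charpoly.roots.card, by simpa using hcayley⟩

theorem eq_one_of_norm_pow_le (hpow : ∀ k : ℕ, ‖A ^ k‖ ≤ C) (hdet : 1 ≤ ‖A.det‖)
    (huni : ∀ (l : ℂ) (v : E), v ≠ 0 → A v = l • v → ‖l‖ = 1 → l = 1) : A = 1 := by
  set T : Module.End ℂ E := (A : E →ₗ[ℂ] E)
  have heigenvector : ∀ l ∈ T.charpoly.roots, ∃ v : E, v ≠ 0 ∧ A v = l • v := fun l hl => by
    obtain ⟨v, hv⟩ := ((Module.End.hasEigenvalue_iff_isRoot_charpoly T l).2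
      (Polynomial.isRoot_of_mem_roots hl)).exists_hasEigenvector
    exact ⟨v, hv.2, hv.apply_eq_smul⟩
  have hle : ∀ l ∈ T.charpoly.roots, ‖l‖ ≤ 1 := fun l hl =>
    let ⟨_, hv, hlv⟩ := heigenvector l hl
    norm_le_one_of_norm_pow_le hpow hv hlv
  have hone : ∀ l ∈ T.charpoly.roots, l = 1 := fun l hl => by
    obtain ⟨v, hv, hlv⟩ := heigenvector l hl
    refine huni l v hv hlv ((hle l hl).antisymm ?_)
    refine one_le_norm_of_one_le_norm_multiset_prod hle ?_ hl
    rwa [← Module.End.det_eq_prod_roots_charpoly_of_splits (IsAlgClosed.splits _)]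
  obtain ⟨m, hm⟩ := isNilpotent_sub_one_of_forall_eigenvalue_eq_one hone
  have hker : LinearMap.ker ((T - 1) ^ 1) = LinearMap.ker ((T - 1) ^ (1 + 1)) := by
    refine le_antisymm (fun v hv => ?_) fun v hv => ?_
    · rw [LinearMap.mem_ker, pow_succ', Module.End.mul_apply, LinearMap.mem_ker.1 hv, map_zero]
    · rw [LinearMap.mem_ker, pow_succ, pow_one, Module.End.mul_apply] at hv
      rw [LinearMap.mem_ker, pow_one]
      exact sub_eq_zero.2 (apply_eq_self_of_apply_sub_eq hpow (sub_eq_zero.1 hv))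
  ext v
  have hv : v ∈ LinearMap.ker ((T - 1) ^ 1) := by
    rw [Module.End.ker_pow_constant hker m, LinearMap.mem_ker, pow_add, hm, mul_zero,
      LinearMap.zero_apply]
  rw [LinearMap.mem_ker, pow_one] at hv
  exact sub_eq_zero.1 hv

end PowerBounded

section Cartan

variable {E G : Type*} [NormedAddCommGroup E] [NormedSpace ℂ E] [FiniteDimensional ℂ E]
  [NormedAddCommGroup G] [NormedSpace ℂ G] [FiniteDimensional ℂ G] {Ω : Set E} {F : E → E}
  {B : ℝ} {z₀ : E}

theorem hasStrictFDerivAt_of_differentiableOn {f : E → G} (hΩ : IsOpen Ω)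
    (hf : DifferentiableOn ℂ f Ω) (hz₀ : z₀ ∈ Ω) : HasStrictFDerivAt f (fderiv ℂ f z₀) z₀ := by
  refine hasStrictFDerivAt_of_hasFDerivAt_of_continuousAt
    ((hΩ.eventually_mem hz₀).mono fun z hz =>
      (hf.differentiableAt (hΩ.mem_nhds hz)).hasFDerivAt) ?_
  exact continuousAt_clm_apply.2 fun v =>
    (differentiableOn_fderiv_apply hΩ hf v).continuousOn.continuousAt (hΩ.mem_nhds hz₀)

-- Cartan's uniqueness theorem. The limit `f` of the averages of `F` satisfies `f ∘ F = f`, and it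
-- is injective near `z₀` because its derivative there is the identity.
theorem eqOn_id_of_fderiv_eq_one (hΩ : IsOpen Ω) (hconn : IsPreconnected Ω)
    (hF : DifferentiableOn ℂ F Ω) (hm : MapsTo F Ω Ω) (hB : ∀ z ∈ Ω, ‖z‖ ≤ B) (hz₀ : z₀ ∈ Ω)
    (hfix : F z₀ = z₀) (hone : fderiv ℂ F z₀ = 1) : EqOn F id Ω := by
  have : CompleteSpace E := FiniteDimensional.complete ℂ E
  obtain ⟨f, hf, -, hfF, hfderiv⟩ :=
    exists_semiconj_fderiv_apply_eq hΩ hF hm hB hz₀ hfix norm_one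
  have hstrict : HasStrictFDerivAt f ((ContinuousLinearEquiv.refl ℂ E : E ≃L[ℂ] E) : E →L[ℂ] E)
      z₀ := by
    convert hasStrictFDerivAt_of_differentiableOn hΩ hf hz₀ using 1
    ext v
    exact (hfderiv v (by simp [hone])).symm
  have hFz₀ : Tendsto F (𝓝 z₀) (𝓝 z₀) := by
    simpa only [ContinuousAt, hfix] using (hF.differentiableAt (hΩ.mem_nhds hz₀)).continuousAt
  have hzero : (fun w => F w - w) =ᶠ[𝓝 z₀] 0 := by
    filter_upwards [hΩ.eventually_mem hz₀, hstrict.eventually_left_inverse,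
      hFz₀.eventually hstrict.eventually_left_inverse] with w hw hinv hinvF
    rw [hfF w hw, one_smul, hinv] at hinvF
    exact sub_eq_zero.2 hinvF.symm
  exact fun w hw => sub_eq_zero.1
    (eqOn_zero_of_eventuallyEq_zero hΩ hconn (hF.sub differentiableOn_id) hz₀ hzero hw)

theorem IsModelDomain.eqOn_id {ℓ : E →L[ℂ] ℂ} {c K ε : ℝ} {e : E}
    (hD : IsModelDomain Ω ℓ c K ε) (he : ℓ e = 1) (hF : IsTangentSelfMap Ω F) (hz₀ : z₀ ∈ Ω)
    (hfix : F z₀ = z₀) : EqOn F id Ω := by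
  obtain ⟨B, -, hB⟩ := hD.exists_norm_le
  obtain ⟨r, hr, hrΩ⟩ := Metric.isOpen_iff.1 hD.isOpen z₀ hz₀
  refine eqOn_id_of_fderiv_eq_one hD.isOpen hD.isPreconnected hF.differentiableOn hF.mapsTo hB hz₀
    hfix (eq_one_of_norm_pow_le (C := 2 * B / r) (fun k => ?_)
      (hD.one_le_norm_det_fderiv he hF hz₀ hfix)
      fun l v => hD.eigenvalue_eq_one_of_norm_eq_one he hF hz₀ hfix)
  rw [← ((hF.differentiableOn.differentiableAt
    (hD.isOpen.mem_nhds hz₀)).hasFDerivAt.iterate hfix k).fderiv]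
  exact norm_fderiv_le_of_norm_le_on_ball hr ((hF.iterate k).differentiableOn.mono hrΩ)
    fun w hw => hB _ (hF.mapsTo.iterate k (hrΩ hw))

end Cartan

/-! ### Normal form at a strongly pseudoconvex boundary point -/

section Taylor

variable {V W : Type*} [NormedAddCommGroup V] [NormedSpace ℝ V] [NormedAddCommGroup W]
  [NormedSpace ℝ W]

theorem taylor_two_isLittleO {f : V → W} {p : V} (hf : ContDiffAt ℝ 2 f p) :
    (fun x => f x - (f p + fderiv ℝ f p (x - p)
      + (1 / 2 : ℝ) • fderiv ℝ (fderiv ℝ f) p (x - p) (x - p))) =o[𝓝 p] fun x => ‖x - p‖ ^ 2 := by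
  set H := fderiv ℝ (fderiv ℝ f) p
  have hsymm : ∀ x y, H x y = H y x := hf.isSymmSndFDerivAt (by simp)
  have hH : HasFDerivAt (fderiv ℝ f) H p :=
    ((hf.fderiv_right (m := 1) (by norm_num)).differentiableAt (by norm_num)).hasFDerivAt
  obtain ⟨δ, hδ, hball⟩ := Metric.eventually_nhds_iff_ball.1 (hf.eventually (by simp))
  have hderiv : ∀ x ∈ ball p δ, HasFDerivAt
      (fun x => f x - (f p + fderiv ℝ f p (x - p) + (1 / 2 : ℝ) • H (x - p) (x - p)))
      (fderiv ℝ f x - fderiv ℝ f p - H (x - p)) x := fun x hx => by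
    have hsub := (hasFDerivAt_id (𝕜 := ℝ) x).sub_const p
    refine ((((hball x hx).differentiableAt (by norm_num)).hasFDerivAt).sub
      ((((fderiv ℝ f p).hasFDerivAt.comp x hsub).const_add (f p)).add
        (((H.hasFDerivAt.comp x hsub).clm_apply hsub).const_smul (1 / 2 : ℝ)))).congr_fderiv ?_
    ext v
    simp [hsymm v]
    module
  have hrem := (convex_ball p δ).isLittleO_pow_succ (n := 1) (mem_ball_self hδ)
    (fun x hx => (hderiv x hx).hasFDerivWithinAt)
    (by simpa [isOpen_ball.nhdsWithin_eq (mem_ball_self hδ)] using hH.isLittleO)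
  simpa [isOpen_ball.nhdsWithin_eq (mem_ball_self hδ)] using hrem

end Taylor

section Homogeneous

variable {V : Type*} [NormedAddCommGroup V] [NormedSpace ℝ V] {P Q : V → ℝ}

theorem le_of_forall_mem_sphere_le (hP : ∀ (t : ℝ) x, P (t • x) = t ^ 2 * P x)
    (hQ : ∀ (t : ℝ) x, Q (t • x) = t ^ 2 * Q x) (hle : ∀ x ∈ sphere (0 : V) 1, P x ≤ Q x) (x : V) :
    P x ≤ Q x := by
  rcases eq_or_ne x 0 with rfl | hx
  · exact (by simpa using hP 0 0 : P 0 = 0).trans_le (by simpa using hQ 0 0 : Q 0 = 0).ge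
  · have hunit := hle (‖x‖⁻¹ • x) (by simp [norm_smul, hx])
    rw [hP, hQ] at hunit
    exact le_of_mul_le_mul_left hunit (by positivity)

variable [FiniteDimensional ℝ V]

theorem exists_le_mul_sq_norm (hQc : Continuous Q) (hQ : ∀ (t : ℝ) x, Q (t • x) = t ^ 2 * Q x) :
    ∃ C > 0, ∀ x, Q x ≤ C * ‖x‖ ^ 2 := by
  have : ProperSpace V := FiniteDimensional.proper ℝ V
  obtain ⟨C, hC⟩ := (isCompact_sphere (0 : V) 1).bddAbove_image hQc.continuousOn
  refine ⟨max C 1, by positivity, le_of_forall_mem_sphere_le hQ (fun t x => ?_) fun x hx => ?_⟩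
  · rw [norm_smul, mul_pow, Real.norm_eq_abs, sq_abs]
    ring
  · rw [mem_sphere_zero_iff_norm.1 hx, one_pow, mul_one]
    exact (hC (mem_image_of_mem Q hx)).trans (le_max_left _ _)

theorem exists_mul_sq_norm_le_of_pos (hQc : Continuous Q)
    (hQ : ∀ (t : ℝ) x, Q (t • x) = t ^ 2 * Q x) (hpos : ∀ x ∈ sphere (0 : V) 1, 0 < Q x) :
    ∃ a > 0, ∀ x, a * ‖x‖ ^ 2 ≤ Q x := by
  have : ProperSpace V := FiniteDimensional.proper ℝ V
  obtain ⟨a, ha, hle⟩ := (isCompact_sphere (0 : V) 1).exists_forall_le' hQc.continuousOn hpos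
  refine ⟨a, ha, le_of_forall_mem_sphere_le (fun t x => ?_) hQ fun x hx => ?_⟩
  · rw [norm_smul, mul_pow, Real.norm_eq_abs, sq_abs]
    ring
  · rw [mem_sphere_zero_iff_norm.1 hx, one_pow, mul_one]
    exact hle x hx

-- Finsler's lemma: `P` is bounded below on the compact part of the unit sphere where `Q ≤ 0`.
theorem exists_mul_sq_norm_le_add (hPc : Continuous P) (hQc : Continuous Q)
    (hP : ∀ (t : ℝ) x, P (t • x) = t ^ 2 * P x) (hQ : ∀ (t : ℝ) x, Q (t • x) = t ^ 2 * Q x)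
    (hP_nonneg : ∀ x, 0 ≤ P x) (hpos : ∀ x, x ≠ 0 → P x = 0 → 0 < Q x) :
    ∃ a > 0, ∃ B > 0, ∀ x, a * ‖x‖ ^ 2 ≤ Q x + B * P x := by
  have : ProperSpace V := FiniteDimensional.proper ℝ V
  obtain ⟨m, hm, hmP⟩ := ((isCompact_sphere (0 : V) 1).inter_right
    (isClosed_le hQc continuous_const)).exists_forall_le' (a := 0) hPc.continuousOn
      fun x (hx : x ∈ sphere 0 1 ∩ {x | Q x ≤ 0}) => (hP_nonneg x).lt_of_ne' fun h =>
        (hpos x (ne_zero_of_mem_unit_sphere ⟨x, hx.1⟩) h).not_ge hx.2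
  obtain ⟨M, hM⟩ := (isCompact_sphere (0 : V) 1).bddBelow_image hQc.continuousOn
  obtain ⟨B, hB, hMB⟩ : ∃ B > 0, -M < B * m :=
    ⟨(|M| + 1) / m, by positivity, by
      rw [div_mul_cancel₀ _ hm.ne']
      linarith [neg_abs_le M]⟩
  have hsum : ∀ x ∈ sphere (0 : V) 1, 0 < Q x + B * P x := fun x hx => by
    rcases lt_or_ge 0 (Q x) with hQx | hQx
    · exact add_pos_of_pos_of_nonneg hQx (mul_nonneg hB.le (hP_nonneg x))
    · linarith [hM (mem_image_of_mem Q hx), mul_le_mul_of_nonneg_left (hmP x ⟨hx, hQx⟩) hB.le]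
  obtain ⟨a, ha, hle⟩ := exists_mul_sq_norm_le_of_pos (Q := fun x => Q x + B * P x)
    (by fun_prop) (fun t x => by rw [hP, hQ]; ring) hsum
  exact ⟨a, ha, B, hB, hle⟩

end Homogeneous

section Bilinear

variable {E : Type*} [NormedAddCommGroup E] [NormedSpace ℂ E]

-- The real part of `y ↦ q x y` is the part of `H` anti-invariant under `I`; complex linearity in
-- `x` is then forced by symmetry.
theorem exists_bilinear_re_eq {H : E →L[ℝ] E →L[ℝ] ℝ} (hH : ∀ x y, H x y = H y x) :
    ∃ q : E →L[ℂ] E →L[ℂ] ℂ, ∀ x, (q x x).re = (1 / 4) * (H x x - H (I • x) (I • x)) := by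
  let J : E →L[ℝ] E := (I • ContinuousLinearMap.id ℂ E).restrictScalars ℝ
  let r : E →L[ℝ] StrongDual ℝ E := (1 / 4 : ℝ) • (H - H.bilinearComp J J)
  let B : E →L[ℝ] StrongDual ℂ E :=
    (StrongDual.extendRCLikeₗᵢ (𝕜 := ℂ)).toContinuousLinearEquiv.toContinuousLinearMap ∘L r
  have hr : ∀ x y, r x y = (1 / 4) * (H x y - H (I • x) (I • y)) := fun x y => by
    simp [r, J]
  have hB : ∀ x y, B x y = r x y - I * r x (I • y) := fun x y => rfl
  have hsymm : ∀ x y, B x y = B y x := fun x y => by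
    simp only [hB, hr, smul_smul, Complex.I_mul_I, neg_one_smul, map_neg,
      _root_.neg_apply, hH x, hH (I • x)]
    push_cast
    ring
  let q : E →L[ℂ] StrongDual ℂ E :=
    { toFun := B
      map_add' := map_add B
      map_smul' := fun c x => by
        ext y
        simp [hsymm _ y]
      cont := B.continuous }
  refine ⟨q, fun x => ?_⟩
  rw [← hr]
  exact StrongDual.re_extendRCLike_apply (𝕜 := ℂ) (r x) x

end Bilinear

section Shear

variable {E : Type*} [NormedAddCommGroup E] [NormedSpace ℂ E] {ℓ : E →L[ℂ] ℂ} {e : E}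
  (q : E →L[ℂ] E →L[ℂ] ℂ)

theorem tangentialProj_of_apply_eq_zero {x : E} (hx : ℓ x = 0) : tangentialProj ℓ e x = x := by
  simp [tangentialProj_apply, hx]

/-- The quadratic shear in the direction `e` by the quadratic form `q` in the tangential variables.
It removes the pluriharmonic part of a defining function. -/
def shear (ℓ : E →L[ℂ] ℂ) (e : E) (q : E →L[ℂ] E →L[ℂ] ℂ) (x : E) : E :=
  x + q (tangentialProj ℓ e x) (tangentialProj ℓ e x) • e

theorem apply_shear (he : ℓ e = 1) (x : E) :
    ℓ (shear ℓ e q x) = ℓ x + q (tangentialProj ℓ e x) (tangentialProj ℓ e x) := by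
  simp [shear, he]

theorem tangentialProj_shear (he : ℓ e = 1) (x : E) :
    tangentialProj ℓ e (shear ℓ e q x) = tangentialProj ℓ e x := by
  have hproj : tangentialProj ℓ e e = 0 := by simp [tangentialProj_apply, he]
  rw [shear, map_add, map_smul, hproj, smul_zero, add_zero]

theorem leftInverse_shear_neg (he : ℓ e = 1) :
    LeftInverse (shear ℓ e (-q)) (shear ℓ e q) := fun x => by
  rw [shear, tangentialProj_shear q he, shear]
  simp

theorem rightInverse_shear_neg (he : ℓ e = 1) :
    RightInverse (shear ℓ e (-q)) (shear ℓ e q) := fun x => by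
  rw [shear, tangentialProj_shear (-q) he, shear]
  simp

theorem differentiable_shear : Differentiable ℂ (shear ℓ e q) := by
  unfold shear
  fun_prop

@[simp]
theorem shear_zero : shear ℓ e q 0 = 0 := by simp [shear]

variable (ℓ e) in
theorem shear_sub_isLittleO : (fun x => shear ℓ e q x - x) =o[𝓝 0] fun x => x := by
  have hbig : (fun x : E => q (tangentialProj ℓ e x) (tangentialProj ℓ e x))
      =O[𝓝 0] fun x => ‖x‖ ^ 2 := by
    have hproj : (fun x : E => ‖tangentialProj ℓ e x‖) =O[𝓝 0] fun x => ‖x‖ :=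
      ((tangentialProj ℓ e).isBigO_id _).norm_norm
    simpa only [sq] using
      (q.isBoundedBilinearMap.isBigO_comp (l := 𝓝 (0 : E))).trans (hproj.mul hproj)
  have hsq : (fun x => shear ℓ e q x - x) =O[𝓝 0] fun x => ‖x‖ ^ 2 := by
    simpa [shear] using hbig.smul (Asymptotics.isBigO_const_const e (one_ne_zero (α := ℝ)) _)
  exact hsq.trans_isLittleO (Asymptotics.isLittleO_norm_pow_id one_lt_two)

end Shear

section NormalForm

variable {E : Type*} [NormedAddCommGroup E] [NormedSpace ℂ E] {Ω : Set E} {ρ : E → ℝ} {p e : E}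
  {ℓ : E →L[ℂ] ℂ} {H : E →L[ℝ] E →L[ℝ] ℝ} {q : E →L[ℂ] E →L[ℂ] ℂ}

/-- The Levi form of `ρ` at `p`, for a function on any complex normed space. -/
def leviForm (ρ : E → ℝ) (p ξ : E) : ℝ :=
  (1 / 4) * (iteratedFDeriv ℝ 2 ρ p ![ξ, ξ] + iteratedFDeriv ℝ 2 ρ p ![I • ξ, I • ξ])

theorem leviForm_eq (ρ : E → ℝ) (p ξ : E) :
    leviForm ρ p ξ = (1 / 4) *
      (fderiv ℝ (fderiv ℝ ρ) p ξ ξ + fderiv ℝ (fderiv ℝ ρ) p (I • ξ) (I • ξ)) := by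
  simp [leviForm, iteratedFDeriv_two_apply]

/-- Near `p`, the set `Ω` is `{ρ < 0}` for a function `ρ` of class `C²` at `p` with `ρ p = 0`,
nonzero differential at `p`, and Levi form positive on the complex tangent space at `p`. -/
structure IsStronglyPseudoconvexAt (Ω : Set E) (ρ : E → ℝ) (p : E) : Prop where
  contDiffAt : ContDiffAt ℝ 2 ρ p
  eventually_mem_iff : ∀ᶠ z in 𝓝 p, z ∈ Ω ↔ ρ z < 0
  apply_eq_zero : ρ p = 0
  fderiv_ne_zero : fderiv ℝ ρ p ≠ 0
  leviForm_pos : ∀ ξ, ξ ≠ 0 → fderiv ℝ ρ p ξ = 0 → fderiv ℝ ρ p (I • ξ) = 0 → 0 < leviForm ρ p ξ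

theorem exists_re_eq_neg_of_ne_zero {L : StrongDual ℝ E} (hL : L ≠ 0) :
    ∃ (ℓ : E →L[ℂ] ℂ) (e : E), ℓ e = 1 ∧ (∀ x, (ℓ x).re = -L x) ∧ ∀ x, (ℓ x).im = L (I • x) := by
  set ℓ : E →L[ℂ] ℂ := -StrongDual.extendRCLike L
  have hre : ∀ x, (ℓ x).re = -L x := fun x => by simp [ℓ, StrongDual.extendRCLike_apply]
  have him : ∀ x, (ℓ x).im = L (I • x) := fun x => by simp [ℓ, StrongDual.extendRCLike_apply]
  obtain ⟨v, hv⟩ := DFunLike.ne_iff.1 hL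
  have hℓv : ℓ v ≠ 0 := fun h => hv (by simpa [h] using (hre v).symm)
  exact ⟨ℓ, (ℓ v)⁻¹ • v, by rw [map_smul, smul_eq_mul, inv_mul_cancel₀ hℓv], hre, him⟩

theorem exists_quadratic_bounds [FiniteDimensional ℂ E] (e : E)
    (hpos : ∀ x, x ≠ 0 → ℓ x = 0 → 0 < (1 / 4) * (H x x + H (I • x) (I • x)))
    (hq : ∀ x, (q x x).re = (1 / 4) * (H x x - H (I • x) (I • x))) :
    ∃ a > 0, ∃ B > 0, ∃ C > 0, ∀ x,
      a * ‖x‖ ^ 2 ≤ (1 / 2) * H x x - (q (tangentialProj ℓ e x) (tangentialProj ℓ e x)).re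
        + B * ‖ℓ x‖ ^ 2 ∧
      (1 / 2) * H x x - (q (tangentialProj ℓ e x) (tangentialProj ℓ e x)).re ≤ C * ‖x‖ ^ 2 := by
  have : FiniteDimensional ℝ E := FiniteDimensional.complexToReal E
  have hcont : Continuous fun x =>
      (1 / 2) * H x x - (q (tangentialProj ℓ e x) (tangentialProj ℓ e x)).re := by fun_prop
  have hhom : ∀ (t : ℝ) (x : E), (1 / 2) * H (t • x) (t • x)
      - (q (tangentialProj ℓ e (t • x)) (tangentialProj ℓ e (t • x))).re
      = t ^ 2 * ((1 / 2) * H x x - (q (tangentialProj ℓ e x) (tangentialProj ℓ e x)).re) :=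
    fun t x => by
      simp only [ContinuousLinearMap.map_smul_of_tower, _root_.smul_apply, smul_eq_mul,
        Complex.real_smul, Complex.re_ofReal_mul]
      ring
  obtain ⟨a, ha, B, hB, hlower⟩ := exists_mul_sq_norm_le_add (P := fun x => ‖ℓ x‖ ^ 2)
    (by fun_prop) hcont
    (fun t x => by
      rw [ContinuousLinearMap.map_smul_of_tower, norm_smul, mul_pow, Real.norm_eq_abs, sq_abs])
    hhom (fun x => by positivity) fun x hx hℓx => by
      have hℓx : ℓ x = 0 := by simpa using hℓx
      rw [tangentialProj_of_apply_eq_zero hℓx, hq]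
      linarith [hpos x hx hℓx]
  obtain ⟨C, hC, hupper⟩ := exists_le_mul_sq_norm hcont hhom
  exact ⟨a, ha, B, hB, C, hC, fun x => ⟨hlower x, hupper x⟩⟩

theorem apply_shear_add_isLittleO (he : ℓ e = 1)
    (htaylor : (fun x => ρ x + (ℓ (x - p)).re - (1 / 2) * H (x - p) (x - p))
      =o[𝓝 p] fun x => ‖x - p‖ ^ 2) :
    (fun w => ρ (p + shear ℓ e q w) + (ℓ w).re
      - ((1 / 2) * H w w - (q (tangentialProj ℓ e w) (tangentialProj ℓ e w)).re))
      =o[𝓝 0] fun w => ‖w‖ ^ 2 := by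
  have hsub := shear_sub_isLittleO ℓ e q
  have hbig : (fun w => shear ℓ e q w) =O[𝓝 0] fun w => w := by
    simpa using hsub.isBigO.add (Asymptotics.isBigO_refl (fun w : E => w) _)
  have hlim : Tendsto (fun w => p + shear ℓ e q w) (𝓝 0) (𝓝 p) :=
    ((differentiable_shear q).continuous.const_add p).tendsto' 0 p (by simp)
  have hρ := (htaylor.comp_tendsto hlim).trans_isBigO
    (k := fun w => ‖w‖ ^ 2) (by simpa [comp_def] using hbig.norm_norm.pow 2)
  have hHbig {f g : E → E} : (fun w => H (f w) (g w)) =O[𝓝 0] fun w => ‖f w‖ * ‖g w‖ :=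
    H.isBoundedBilinearMap.isBigO_comp
  have hHl : (fun w => H (shear ℓ e q w - w) (shear ℓ e q w)) =o[𝓝 0] fun w => ‖w‖ ^ 2 := by
    simpa only [sq] using hHbig.trans_isLittleO (hsub.norm_norm.mul_isBigO hbig.norm_norm)
  have hHr : (fun w => H w (shear ℓ e q w - w)) =o[𝓝 0] fun w => ‖w‖ ^ 2 := by
    simpa only [sq] using hHbig.trans_isLittleO
      ((Asymptotics.isBigO_refl (fun w : E => ‖w‖) _).mul_isLittleO hsub.norm_norm)
  refine (hρ.add ((hHl.add hHr).const_mul_left (1 / 2))).congr_left fun w => ?_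
  simp only [comp_apply, add_sub_cancel_left, apply_shear q he, Complex.add_re]
  simp only [map_sub, _root_.sub_apply]
  ring

theorem isModelDomain_of_eventually_pinched {r : E → ℝ} {a B C : ℝ} (hΩ : IsOpen Ω)
    (hconn : IsPreconnected Ω) (hbd : Bornology.IsBounded Ω) (ha : 0 < a) (hB : 0 < B) (hC : 0 < C)
    (hr : ∀ᶠ w in 𝓝 0, w ∈ Ω ↔ r w < 0)
    (hpinch : ∀ᶠ w in 𝓝 0, a * ‖w‖ ^ 2 ≤ r w + (ℓ w).re + B * ‖ℓ w‖ ^ 2 ∧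
      r w + (ℓ w).re ≤ C * ‖w‖ ^ 2) :
    ∃ K ε, IsModelDomain Ω ℓ a K ε := by
  obtain ⟨δ, hδ, hball⟩ := Metric.eventually_nhds_iff_ball.1 (hr.and hpinch)
  have : 0 ≤ ‖ℓ‖ / δ := by positivity
  refine ⟨B + C + ‖ℓ‖ / δ, δ, hΩ, hconn, hbd, ?_, ha, by positivity, hδ, ?_, ?_⟩
  · rw [hr.self_of_nhds]
    simpa using hpinch.self_of_nhds.1
  · intro w hw hwδ
    obtain ⟨hmem, hlower, -⟩ := hball w (mem_ball_zero_iff.2 hwδ)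
    have hCδ : 0 ≤ (C + ‖ℓ‖ / δ) * ‖ℓ w‖ ^ 2 := by positivity
    linarith [hmem.1 hw]
  · intro w hw
    have hwδ : ‖w‖ < δ := by
      by_contra! hδw
      refine hw.not_ge ?_
      calc (ℓ w).re ≤ ‖ℓ‖ / δ * (δ * ‖w‖) := by
            rw [← mul_assoc, div_mul_cancel₀ _ hδ.ne']
            exact (Complex.re_le_norm _).trans (ℓ.le_opNorm w)
        _ ≤ ‖ℓ‖ / δ * (‖w‖ * ‖w‖) := by gcongr
        _ ≤ (B + C + ‖ℓ‖ / δ) * ‖w‖ ^ 2 := by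
            rw [sq]
            gcongr
            linarith
    obtain ⟨hmem, -, hupper⟩ := hball w (mem_ball_zero_iff.2 hwδ)
    have hBδ : 0 ≤ (B + ‖ℓ‖ / δ) * ‖w‖ ^ 2 := by positivity
    exact hmem.2 (by linarith)

end NormalForm

section Transfer

variable {E : Type*} [NormedAddCommGroup E] [NormedSpace ℂ E] {Ω : Set E} {ρ : E → ℝ} {p e : E}
  {ℓ : E →L[ℂ] ℂ} {F : E → E}

/-- The quadratic shear in the direction `e`, with its origin moved to `p`, as a homeomorphism. -/
def shearHomeomorph (p : E) (he : ℓ e = 1) (q : E →L[ℂ] E →L[ℂ] ℂ) : E ≃ₜ E where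
  toFun w := p + shear ℓ e q w
  invFun z := shear ℓ e (-q) (z - p)
  left_inv w := by simpa only [add_sub_cancel_left] using leftInverse_shear_neg q he w
  right_inv z := by simp only [rightInverse_shear_neg q he (z - p), add_sub_cancel]
  continuous_toFun := (differentiable_shear q).continuous.const_add p
  continuous_invFun := (differentiable_shear (-q)).continuous.comp (continuous_sub_right p)

theorem isBounded_preimage_homeomorph {X Y : Type*} [PseudoMetricSpace X] [PseudoMetricSpace Y]
    [ProperSpace Y] {s : Set Y} (hs : Bornology.IsBounded s) (Φ : X ≃ₜ Y) :
    Bornology.IsBounded (Φ ⁻¹' s) :=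
  (Φ.isCompact_preimage.2 hs.isCompact_closure).isBounded.subset (preimage_mono subset_closure)

theorem eventually_pinched_of_isLittleO {r Q : E → ℝ} {a B C : ℝ} (ha : 0 < a)
    (hr : (fun w => r w + (ℓ w).re - Q w) =o[𝓝 0] fun w => ‖w‖ ^ 2)
    (hQ : ∀ w, a * ‖w‖ ^ 2 ≤ Q w + B * ‖ℓ w‖ ^ 2 ∧ Q w ≤ C * ‖w‖ ^ 2) :
    ∀ᶠ w in 𝓝 0, a / 2 * ‖w‖ ^ 2 ≤ r w + (ℓ w).re + B * ‖ℓ w‖ ^ 2 ∧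
      r w + (ℓ w).re ≤ (C + a / 2) * ‖w‖ ^ 2 := by
  filter_upwards [hr.bound (half_pos ha)] with w hw
  rw [norm_pow, norm_norm] at hw
  obtain ⟨hlower, hupper⟩ := abs_le.1 hw
  constructor <;> linarith [hQ w]

theorem IsStronglyPseudoconvexAt.exists_isModelDomain_preimage [FiniteDimensional ℂ E]
    (hp : IsStronglyPseudoconvexAt Ω ρ p) (hΩ : IsOpen Ω) (hconn : IsPreconnected Ω)
    (hbd : Bornology.IsBounded Ω) :
    ∃ (Φ : E ≃ₜ E) (ℓ : E →L[ℂ] ℂ) (e : E) (a K ε : ℝ), Differentiable ℂ Φ ∧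
      Differentiable ℂ Φ.symm ∧ Φ 0 = p ∧ ℓ e = 1 ∧ IsModelDomain (Φ ⁻¹' Ω) ℓ a K ε := by
  have : ProperSpace E := FiniteDimensional.proper ℂ E
  obtain ⟨ℓ, e, he, hre, him⟩ := exists_re_eq_neg_of_ne_zero hp.fderiv_ne_zero
  obtain ⟨q, hq⟩ := exists_bilinear_re_eq (hp.contDiffAt.isSymmSndFDerivAt (by simp))
  obtain ⟨a, ha, B, hB, C, hC, hbounds⟩ := exists_quadratic_bounds (ℓ := ℓ) e
    (fun x hx hℓx => leviForm_eq ρ p x ▸ hp.leviForm_pos x hx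
      (by simpa [hℓx] using hre x) (by simpa [hℓx] using (him x).symm)) hq
  have htaylor := (taylor_two_isLittleO hp.contDiffAt).congr_left fun x => by
    rw [hp.apply_eq_zero, zero_add, ← neg_neg (fderiv ℝ ρ p _), ← hre, smul_eq_mul, ← sub_sub,
      sub_neg_eq_add]
  let Φ := shearHomeomorph p he q
  have hΦ0 : Φ 0 = p := by simp [Φ, shearHomeomorph]
  have hΦ : Differentiable ℂ Φ := (differentiable_shear q).const_add p
  have hΦsymm : Differentiable ℂ Φ.symm :=
    (differentiable_shear (-q)).comp (differentiable_id.sub_const p)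
  have hlim : Tendsto Φ (𝓝 0) (𝓝 p) := hΦ0 ▸ Φ.continuous.tendsto 0
  obtain ⟨K, ε, hD⟩ := isModelDomain_of_eventually_pinched (hΩ.preimage Φ.continuous)
    (Φ.isPreconnected_preimage.2 hconn) (isBounded_preimage_homeomorph hbd Φ) (half_pos ha) hB
    (by positivity) (hlim.eventually hp.eventually_mem_iff)
    (eventually_pinched_of_isLittleO ha (apply_shear_add_isLittleO he htaylor) hbounds)
  exact ⟨Φ, ℓ, e, _, K, ε, hΦ, hΦsymm, hΦ0, he, hD⟩

theorem isTangentSelfMap_conj [FiniteDimensional ℂ E] {Φ : E ≃ₜ E} (hΦ : Differentiable ℂ Φ)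
    (hΦsymm : Differentiable ℂ Φ.symm) (hΦ0 : Φ 0 = p) (hF : DifferentiableOn ℂ F Ω)
    (hmaps : MapsTo F Ω Ω) (ho : (fun z => F z - z) =o[𝓝[Ω] p] fun z => ‖z - p‖ ^ 2) :
    IsTangentSelfMap (Φ ⁻¹' Ω) (Φ.symm ∘ F ∘ Φ) where
  differentiableOn :=
    hΦsymm.comp_differentiableOn (hF.comp hΦ.differentiableOn (mapsTo_preimage Φ Ω))
  mapsTo w hw := by simpa using hmaps hw
  isLittleO := by
    have hlim : Tendsto Φ (𝓝[Φ ⁻¹' Ω] 0) (𝓝[Ω] p) := hΦ0 ▸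
      Φ.continuous.continuousWithinAt.tendsto_nhdsWithin (mapsTo_preimage Φ Ω)
    have hbig : (fun w => Φ w - p) =O[𝓝[Φ ⁻¹' Ω] 0] fun w => w := by
      simpa [hΦ0] using (hΦ 0).isBigO_sub.mono nhdsWithin_le_nhds
    have hFΦ : (fun w => F (Φ w) - Φ w) =o[𝓝[Φ ⁻¹' Ω] 0] fun w => ‖w‖ ^ 2 :=
      (ho.comp_tendsto hlim).trans_isBigO (hbig.norm_norm.pow 2)
    have hsq : Tendsto (fun z => ‖z - p‖ ^ 2) (𝓝[Ω] p) (𝓝 0) :=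
      ((by fun_prop : Continuous fun z => ‖z - p‖ ^ 2).tendsto' p 0 (by simp)).mono_left
        nhdsWithin_le_nhds
    have hFlim : Tendsto F (𝓝[Ω] p) (𝓝 p) := by
      simpa using (ho.isBigO.trans_tendsto hsq).add (tendsto_id.mono_left nhdsWithin_le_nhds)
    have hsymm := ((hasStrictFDerivAt_of_differentiableOn isOpen_univ hΦsymm.differentiableOn
      (mem_univ p)).isBigO_sub).comp_tendsto
        ((hFlim.comp hlim).prodMk_nhds (hlim.mono_right nhdsWithin_le_nhds))
    simpa [comp_def] using hsymm.trans_isLittleO hFΦ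

end Transfer

end HuangConjecture

theorem huang_conjecture_strongly_pseudoconvex_general {E : Type*} [NormedAddCommGroup E]
    [NormedSpace ℂ E] [FiniteDimensional ℂ E] {Ω : Set E} {ρ : E → ℝ} {p z₀ : E} {F : E → E}
    (hΩ : IsOpen Ω) (hconn : IsPreconnected Ω) (hbd : Bornology.IsBounded Ω)
    (hp : HuangConjecture.IsStronglyPseudoconvexAt Ω ρ p) (hF : DifferentiableOn ℂ F Ω)
    (hmaps : MapsTo F Ω Ω) (ho : (fun z => F z - z) =o[𝓝[Ω] p] fun z => ‖z - p‖ ^ 2)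
    (hz₀ : z₀ ∈ Ω) (hfix : F z₀ = z₀) : EqOn F id Ω := by
  obtain ⟨Φ, ℓ, e, a, K, ε, hΦ, hΦsymm, hΦ0, he, hD⟩ :=
    hp.exists_isModelDomain_preimage hΩ hconn hbd
  have hid : EqOn (Φ.symm ∘ F ∘ Φ) id (Φ ⁻¹' Ω) :=
    hD.eqOn_id he (HuangConjecture.isTangentSelfMap_conj hΦ hΦsymm hΦ0 hF hmaps ho)
      (z₀ := Φ.symm z₀) (by simpa using hz₀) (by simp [hfix])
  intro z hz
  simpa using hid (x := Φ.symm z) (by simpa using hz)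

theorem IsDefiningFunction.isStronglyPseudoconvexAt {n : ℕ} {Ω : Set (En n)} {m : ℕ∞}
    {ρ : En n → ℝ} {p : En n} (hρ : IsDefiningFunction Ω m ρ) (hm : 2 ≤ m) (hp : p ∈ frontier Ω)
    (hspc : StronglyPcxAt ρ p) : HuangConjecture.IsStronglyPseudoconvexAt Ω ρ p := by
  obtain ⟨hsmooth, rfl, hfrontier, hd⟩ := hρ
  exact ⟨hsmooth.contDiffAt.of_le (WithTop.coe_le_coe.2 hm), Eventually.of_forall fun _ => Iff.rfl,
    hfrontier.subset hp, hd p hp, fun ξ hξ h h' => hspc ξ hξ ⟨h, h'⟩⟩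

theorem LittleOh.isLittleO {n : ℕ} {Ω : Set (En n)} {F : En n → En n} {p : En n} {k : ℕ}
    (h : LittleOh Ω F p k) (hp : p ∉ Ω) :
    (fun z => F z - z) =o[𝓝[Ω] p] fun z => ‖z - p‖ ^ k := by
  refine .of_norm_left ((Asymptotics.isLittleO_iff_tendsto' ?_).2 h)
  filter_upwards [self_mem_nhdsWithin] with z hz hzero
  have hzp : ‖z - p‖ = 0 := eq_zero_of_pow_eq_zero hzero
  exact absurd (norm_sub_eq_zero_iff.1 hzp) (ne_of_mem_of_not_mem hz hp)

theorem huang_conjecture_strongly_pseudoconvex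
    {n : ℕ} (hn : 2 ≤ n) (Ω : Set (En n)) (ρ : En n → ℝ)
    (hΩ : IsDomain' Ω) (hbd : Bornology.IsBounded Ω)
    (hρ : IsDefiningFunction Ω 3 ρ)
    (hspc : ∀ q ∈ frontier Ω, StronglyPcxAt ρ q)
    (p : En n) (hp : p ∈ frontier Ω)
    (F : En n → En n) (hF : DifferentiableOn ℂ F Ω) (hFself : MapsTo F Ω Ω)
    (z₀ : En n) (hz₀ : z₀ ∈ Ω) (hfix : F z₀ = z₀)
    (ho : LittleOh Ω F p 2) :
    ∀ z ∈ Ω, F z = z :=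
  huang_conjecture_strongly_pseudoconvex_general hΩ.1 hΩ.2.isPreconnected hbd
    (hρ.isStronglyPseudoconvexAt (by norm_num) hp (hspc p hp)) hF hFself
    (ho.isLittleO ((disjoint_frontier_iff_isOpen.2 hΩ.1).notMem_of_mem_left hp)) hz₀ hfix
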